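/- arXiv:1304.1015 — 2 statements merged into one kernel-verified Lean document; each statement's English description precedes it below -/
import Mathlib

section
/- Let 𝔊 be a homothecy invariant collection of open rectangles (rectangular parallelepipeds, not necessarily axis-parallel) in ℝⁿ, and let μ, ν be locally finite nonnegative Borel measures on ℝⁿ, with μ nonzero and doubling with respect to 𝔊. Then the following are equivalent: (i) there exist γ ∈ (0,1) and c > 0 such that ν({x ∈ ℝⁿ : M_{𝔊,μ}(1_E)(x) > γ}) ≤ c·ν(E) for every Borel set E ⊆ ℝⁿ; (ii) there exists p₀ > 1 such that M_{𝔊,μ} is bounded on L^p(ν) for every p > p₀. -/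
open MeasureTheory Set Filter
open scoped ENNReal Topology Pointwise

noncomputable section

/-- The maximal operator `M_{𝔅,μ}` associated to a measure `μ` and a collection `𝔅`
of subsets of `ℝⁿ`, applied to `f` at the point `x` (valued in `ℝ≥0∞`; it equals `0`
outside the union of `𝔅`). -/
noncomputable def maxOp {n : ℕ} (μ : Measure (EuclideanSpace ℝ (Fin n)))
    (𝔅 : Set (Set (EuclideanSpace ℝ (Fin n))))
    (f : EuclideanSpace ℝ (Fin n) → ℝ) (x : EuclideanSpace ℝ (Fin n)) : ℝ≥0∞ :=
  ⨆ (B : Set (EuclideanSpace ℝ (Fin n))) (_ : B ∈ 𝔅) (_ : x ∈ B) (_ : 0 < μ B),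
    (∫⁻ y in B, ENNReal.ofReal |f y| ∂μ) / μ B

/-- A collection of sets is homothecy invariant if it is closed under translations and
positive dilations. -/
def HomothecyInvariant {n : ℕ} (𝔅 : Set (Set (EuclideanSpace ℝ (Fin n)))) : Prop :=
  ∀ B ∈ 𝔅, (∀ y : EuclideanSpace ℝ (Fin n), y +ᵥ B ∈ 𝔅) ∧ (∀ s : ℝ, 0 < s → s • B ∈ 𝔅)

/-- `μ` is doubling with respect to the collection `𝔅`, with constant `Δ`: whenever
`B ∈ 𝔅` and a translate of the dilate `2·B` contains `B`, its measure is at most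
`Δ·μ(B)`. -/
def DoublingWrt {n : ℕ} (μ : Measure (EuclideanSpace ℝ (Fin n)))
    (𝔅 : Set (Set (EuclideanSpace ℝ (Fin n)))) (Δ : ℝ) : Prop :=
  ∀ B ∈ 𝔅, ∀ σ : EuclideanSpace ℝ (Fin n),
    B ⊆ σ +ᵥ (2 : ℝ) • B → μ (σ +ᵥ (2 : ℝ) • B) ≤ ENNReal.ofReal Δ * μ B

/-- A member of a basis of convex sets: nonempty, bounded, open and convex. -/
def IsConvexBasisSet {n : ℕ} (B : Set (EuclideanSpace ℝ (Fin n))) : Prop :=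
  B.Nonempty ∧ Bornology.IsBounded B ∧ IsOpen B ∧ Convex ℝ B

/-- An open axis-parallel rectangle in `ℝⁿ`. -/
def IsAxisRect {n : ℕ} (R : Set (EuclideanSpace ℝ (Fin n))) : Prop :=
  ∃ a b : Fin n → ℝ, (∀ i, a i < b i) ∧ R = {x | ∀ i, x i ∈ Set.Ioo (a i) (b i)}

/-- An open rectangle (possibly rotated rectangular parallelepiped) in `ℝⁿ`:
the image of an open axis-parallel rectangle under a rigid motion. -/
def IsRect {n : ℕ} (R : Set (EuclideanSpace ℝ (Fin n))) : Prop :=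
  ∃ (f : EuclideanSpace ℝ (Fin n) ≃ᵢ EuclideanSpace ℝ (Fin n))
    (S : Set (EuclideanSpace ℝ (Fin n))), IsAxisRect S ∧ R = f '' S

/-- An open axis-parallel cube in `ℝⁿ`. -/
def IsAxisCube {n : ℕ} (C : Set (EuclideanSpace ℝ (Fin n))) : Prop :=
  ∃ (a : Fin n → ℝ) (s : ℝ), 0 < s ∧ C = {x | ∀ i, x i ∈ Set.Ioo (a i) (a i + s)}

/-- `M_{𝔅,μ}` is bounded on `L^p(ν)`. -/
def BoundedOnLp {n : ℕ} (μ ν : Measure (EuclideanSpace ℝ (Fin n)))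
    (𝔅 : Set (Set (EuclideanSpace ℝ (Fin n)))) (p : ℝ) : Prop :=
  ∃ C : ℝ≥0∞, C ≠ ⊤ ∧ ∀ f : EuclideanSpace ℝ (Fin n) → ℝ, Measurable f →
    ∫⁻ x, maxOp μ 𝔅 f x ^ p ∂ν ≤ C * ∫⁻ x, ENNReal.ofReal |f x| ^ p ∂ν

/-- The Tauberian condition for `M_{𝔅,μ}` at level `γ`, with constant `c`, with respect
to the measure `ν`. -/
def TauberianCond {n : ℕ} (μ ν : Measure (EuclideanSpace ℝ (Fin n)))
    (𝔅 : Set (Set (EuclideanSpace ℝ (Fin n)))) (γ c : ℝ) : Prop :=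
  ∀ E : Set (EuclideanSpace ℝ (Fin n)), MeasurableSet E →
    ν {x | ENNReal.ofReal γ < maxOp μ 𝔅 (E.indicator 1) x} ≤ ENNReal.ofReal c * ν E

/-- The standard open dyadic box of scale `2^k` and position `m` in `ℝⁿ`. -/
def stdBox (n : ℕ) (k : ℤ) (m : Fin n → ℤ) : Set (Fin n → ℝ) :=
  {x | ∀ i, (m i : ℝ) * 2 ^ k < x i ∧ x i < ((m i : ℝ) + 1) * 2 ^ k}

/-- A parametrization of a rectangular grid: a rigid motion composed with a positive
diagonal scaling. The image of the standard unit box under such a map is a rectangle. -/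
def IsRectParam {n : ℕ} (T : (Fin n → ℝ) → EuclideanSpace ℝ (Fin n)) : Prop :=
  ∃ (f : EuclideanSpace ℝ (Fin n) ≃ᵢ EuclideanSpace ℝ (Fin n)) (l : Fin n → ℝ),
    (∀ i, 0 < l i) ∧
    ∀ x, T x = f ((WithLp.equiv 2 (Fin n → ℝ)).symm (fun i => l i * x i))

/-- The dyadic mesh generated by a rectangle parametrized by `T`. -/
def dyadicMesh {n : ℕ} (T : (Fin n → ℝ) → EuclideanSpace ℝ (Fin n)) :
    Set (Set (EuclideanSpace ℝ (Fin n))) :=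
  {S | ∃ (k : ℤ) (m : Fin n → ℤ), S = T '' stdBox n k m}

/-- `S` is a dyadic descendant of the rectangle `R`, `s` generations inside `R`. -/
def DyadicDescendant {n : ℕ} (R S : Set (EuclideanSpace ℝ (Fin n))) (s : ℕ) : Prop :=
  ∃ T : (Fin n → ℝ) → EuclideanSpace ℝ (Fin n), IsRectParam T ∧
    T '' stdBox n 0 0 = R ∧
    ∃ m : Fin n → ℤ, (∀ i, 0 ≤ m i ∧ m i < 2 ^ s) ∧ S = T '' stdBox n (-(s : ℤ)) m

/-- The family of all homothetic copies (translates and positive dilates) of `R₀`. -/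
def homCopies {n : ℕ} (R₀ : Set (EuclideanSpace ℝ (Fin n))) :
    Set (Set (EuclideanSpace ℝ (Fin n))) :=
  {S | ∃ (y : EuclideanSpace ℝ (Fin n)) (s : ℝ), 0 < s ∧ S = y +ᵥ s • R₀}

/-- Iterated halo sets `H_β^k(E)`: `H_β^0(E) = E` and
`H_β^{k+1}(E) = {x : M_{𝔊,μ}(1_{H_β^k(E)})(x) ≥ β}`. -/
def Hiter {n : ℕ} (μ : Measure (EuclideanSpace ℝ (Fin n)))
    (𝔊 : Set (Set (EuclideanSpace ℝ (Fin n)))) (β : ℝ)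
    (E : Set (EuclideanSpace ℝ (Fin n))) : ℕ → Set (EuclideanSpace ℝ (Fin n))
  | 0 => E
  | k + 1 => {x | ENNReal.ofReal β ≤ maxOp μ 𝔊 ((Hiter μ 𝔊 β E k).indicator 1) x}

/-- The Muckenhoupt `A_{p,𝔅}` condition for a weight `w` (with respect to Lebesgue
measure); here `1 - p/(p-1) = 1 - p'`. -/
def MuckenhouptAp {n : ℕ} (𝔅 : Set (Set (EuclideanSpace ℝ (Fin n))))
    (w : EuclideanSpace ℝ (Fin n) → ℝ) (p : ℝ) : Prop :=
  ∃ C : ℝ≥0∞, C ≠ ⊤ ∧ ∀ B ∈ 𝔅,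
    ((∫⁻ x in B, ENNReal.ofReal (w x) ∂volume) / volume B) *
      (((∫⁻ x in B, ENNReal.ofReal (w x) ^ (1 - p / (p - 1)) ∂volume) / volume B) ^ (p - 1))
      ≤ C

/-- `𝔅` is a Muckenhoupt basis: for every `1 < p < ∞` and every weight `w ∈ A_{p,𝔅}`,
the maximal operator `M_𝔅` is bounded on `L^p(w)`. -/
def MuckenhouptBasis {n : ℕ} (𝔅 : Set (Set (EuclideanSpace ℝ (Fin n)))) : Prop :=
  ∀ p : ℝ, 1 < p → ∀ w : EuclideanSpace ℝ (Fin n) → ℝ, (∀ x, 0 ≤ w x) →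
    LocallyIntegrable w volume → MuckenhouptAp 𝔅 w p →
    BoundedOnLp volume (volume.withDensity fun x => ENNReal.ofReal (w x)) 𝔅 p

end

/-!
A member of `𝔊` is a centrally symmetric convex body, so the gauge of that body turns its homothetic
copies into the balls of a norm, and the hypothesis on `μ` into the doubling property of balls.

For the forward implication, suppose `E` is sparse in `B ∈ 𝔊`: `μ (E ∩ B) ≤ γ μ B`. By Lebesgue
density, almost every `x ∈ E ∩ B` lies in a copy of `B` inside `B`, shrunk towards `x`, in which `E`
has density above `γ`. Enlarge it up to the supremal such ratio: the resulting copy is covered by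
copies in which `E` is dense, hence by the halo of `E`, while `E` itself has density at most `γ` in
it. A Vitali selection among these copies shows that adding the halo to `E` multiplies `μ (E ∩ B)`
by at least a constant `a > 1`; if `E` is not sparse in `B`, adding the halo swallows `B`. So the
halo of `E` at level `2⁻ᵐ` is reached after `O(m)` steps, each of which multiplies `ν` by at most
`1 + c`. This is a restricted weak type estimate, and summing it over the dyadic level sets of `f`
bounds the maximal operator on `L^p(ν)` for large `p`. The reverse implication is Chebyshev's
inequality for `M_{𝔊,μ}(1_E)`.
-/

open Metric
open scoped NNReal


section BallDoubling

/-- `μ` doubles on every ball, with constant `K`; unlike `IsUnifLocDoublingMeasure`, this holds at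
all scales and with a named constant. -/
def BallDoubling {X : Type*} [PseudoMetricSpace X] [MeasurableSpace X] (μ : Measure X)
    (K : ℝ≥0) : Prop :=
  ∀ ⦃c : X⦄ ⦃r : ℝ⦄, 0 < r → μ (ball c (2 * r)) ≤ K * μ (ball c r)

namespace BallDoubling

section PseudoMetric

variable {X : Type*} [PseudoMetricSpace X] [MeasurableSpace X] {μ : Measure X} {K : ℝ≥0}

lemma measure_ball_two_pow_mul_le (hμ : BallDoubling μ K) (c : X) {r : ℝ} (hr : 0 < r) (k : ℕ) :
    μ (ball c (2 ^ k * r)) ≤ (K : ℝ≥0∞) ^ k * μ (ball c r) := by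
  induction k with
  | zero => simp
  | succ k ih =>
    calc μ (ball c (2 ^ (k + 1) * r)) = μ (ball c (2 * (2 ^ k * r))) := by rw [pow_succ', mul_assoc]
      _ ≤ K * μ (ball c (2 ^ k * r)) := hμ (by positivity)
      _ ≤ K * (K ^ k * μ (ball c r)) := by gcongr
      _ = K ^ (k + 1) * μ (ball c r) := by rw [pow_succ', mul_assoc]

lemma measure_closedBall_mul_le (hμ : BallDoubling μ K) (c : X) {r a : ℝ} (hr : 0 < r) {k : ℕ}
    (ha : a < 2 ^ k) : μ (closedBall c (a * r)) ≤ (K : ℝ≥0∞) ^ k * μ (ball c r) :=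
  (measure_mono (closedBall_subset_ball (mul_lt_mul_of_pos_right ha hr))).trans
    (hμ.measure_ball_two_pow_mul_le c hr k)

lemma isUnifLocDoublingMeasure (hμ : BallDoubling μ K) : IsUnifLocDoublingMeasure μ := by
  refine ⟨⟨K ^ 2, ?_⟩⟩
  filter_upwards [self_mem_nhdsWithin] with ε hε x
  calc μ (closedBall x (2 * ε)) ≤ (K : ℝ≥0∞) ^ 2 * μ (ball x ε) :=
        hμ.measure_closedBall_mul_le x hε (by norm_num)
    _ ≤ (K ^ 2 : ℝ≥0) * μ (closedBall x ε) := by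
        push_cast
        gcongr
        exact ball_subset_closedBall

lemma measure_ball_lt_top [IsLocallyFiniteMeasure μ] (hμ : BallDoubling μ K) (c : X) (r : ℝ) :
    μ (ball c r) < ∞ := by
  obtain ⟨ε, hε, hfin⟩ := nhds_basis_ball.mem_iff.1 (μ.finiteAt_nhds c).choose_spec.1
  have hfin : μ (ball c ε) < ∞ :=
    (measure_mono hfin).trans_lt (μ.finiteAt_nhds c).choose_spec.2
  obtain ⟨k, hk⟩ := pow_unbounded_of_one_lt (r / ε) (one_lt_two (α := ℝ))
  calc μ (ball c r) ≤ μ (ball c (2 ^ k * ε)) :=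
        measure_mono (ball_subset_ball ((div_lt_iff₀ hε).1 hk).le)
    _ ≤ K ^ k * μ (ball c ε) := hμ.measure_ball_two_pow_mul_le c hε k
    _ < ∞ := ENNReal.mul_lt_top (ENNReal.pow_lt_top ENNReal.coe_lt_top) hfin

end PseudoMetric

lemma mul_measure_le_of_forall_mem_ball {X : Type*} [MetricSpace X] [SecondCountableTopology X]
    [MeasurableSpace X] [OpensMeasurableSpace X] {μ ρ : Measure X} {K : ℝ≥0}
    (hμ : BallDoubling μ K) {a : ℝ≥0∞} {s V : Set X} {R : ℝ}
    (h : ∀ x ∈ s, ∃ c, ∃ r ∈ Ioc 0 R, x ∈ ball c r ∧ ball c r ⊆ V ∧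
      a * μ (ball c r) ≤ ρ (ball c r)) :
    a * μ s ≤ K ^ 3 * ρ V := by
  obtain ⟨u, hu, hdisj, hcov⟩ :=
    Vitali.exists_disjoint_subfamily_covering_enlargement_closedBall
      {p : X × ℝ | p.2 ∈ Ioc 0 R ∧ ball p.1 p.2 ⊆ V ∧ a * μ (ball p.1 p.2) ≤ ρ (ball p.1 p.2)}
      Prod.fst Prod.snd R (fun p hp => hp.1.2) 4 (by norm_num)
  replace hdisj : u.PairwiseDisjoint fun p => ball p.1 p.2 :=
    hdisj.mono fun p => ball_subset_closedBall
  have hcount : u.Countable := hdisj.countable_of_isOpen (fun _ _ => isOpen_ball)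
    fun p hp => nonempty_ball.2 (hu hp).1.1
  have hs : s ⊆ ⋃ p ∈ u, closedBall p.1 (4 * p.2) := by
    intro x hx
    obtain ⟨c, r, hr, hxcr, hV, hρ⟩ := h x hx
    obtain ⟨q, hq, hsub⟩ := hcov (c, r) ⟨hr, hV, hρ⟩
    exact mem_iUnion₂.2 ⟨q, hq, hsub (ball_subset_closedBall hxcr)⟩
  have hball : ∀ p ∈ u, a * μ (closedBall p.1 (4 * p.2)) ≤ K ^ 3 * ρ (ball p.1 p.2) := by
    intro p hp
    calc a * μ (closedBall p.1 (4 * p.2)) ≤ a * (K ^ 3 * μ (ball p.1 p.2)) := by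
          gcongr
          exact hμ.measure_closedBall_mul_le p.1 (hu hp).1.1 (by norm_num)
      _ = K ^ 3 * (a * μ (ball p.1 p.2)) := mul_left_comm _ _ _
      _ ≤ K ^ 3 * ρ (ball p.1 p.2) := by
          gcongr
          exact (hu hp).2.2
  calc a * μ s ≤ a * ∑' p : u, μ (closedBall p.1.1 (4 * p.1.2)) := by
        gcongr
        exact (measure_mono hs).trans (measure_biUnion_le μ hcount _)
    _ ≤ ∑' p : u, K ^ 3 * ρ (ball p.1.1 p.1.2) := by
        rw [← ENNReal.tsum_mul_left]
        exact ENNReal.tsum_le_tsum fun p => hball p p.2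
    _ = K ^ 3 * ρ (⋃ p ∈ u, ball p.1 p.2) := by
        rw [ENNReal.tsum_mul_left, measure_biUnion hcount hdisj fun _ _ => measurableSet_ball]
    _ ≤ K ^ 3 * ρ V := by
        gcongr
        exact iUnion₂_subset fun p hp => (hu hp).2.1

end BallDoubling

end BallDoubling

section HomotheticBall

variable {X : Type*} [NormedAddCommGroup X] [NormedSpace ℝ X]

/-- The image of `ball c r` under the homothety with centre `x` and ratio `t`. -/
def homotheticBall (x c : X) (r t : ℝ) : Set X :=
  ball (AffineMap.lineMap x c t) (t * r)

variable {x c : X} {r : ℝ}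

lemma homotheticBall_one : homotheticBall x c r 1 = ball c r := by
  simp only [homotheticBall, AffineMap.lineMap_apply_one, one_mul]

lemma homotheticBall_mono (hx : dist x c ≤ r) : Monotone (homotheticBall x c r) := by
  intro s t hst
  refine ball_subset_ball' ?_
  rw [dist_lineMap_lineMap, Real.dist_eq, abs_sub_comm, abs_of_nonneg (sub_nonneg.2 hst)]
  linarith [mul_le_mul_of_nonneg_left hx (sub_nonneg.2 hst)]

lemma mem_homotheticBall_self (hx : x ∈ ball c r) {t : ℝ} (ht : 0 < t) :
    x ∈ homotheticBall x c r t := by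
  rw [homotheticBall, mem_ball, dist_left_lineMap, Real.norm_of_nonneg ht.le]
  exact mul_lt_mul_of_pos_left hx ht

lemma isOpen_setOf_mem_homotheticBall (y : X) : IsOpen {t | y ∈ homotheticBall x c r t} :=
  isOpen_lt (f := fun t => dist y (AffineMap.lineMap x c t)) (g := (· * r))
    (by fun_prop) (by fun_prop)

lemma homotheticBall_sSup_subset {A : Set ℝ} (hne : A.Nonempty) (hbdd : BddAbove A) :
    homotheticBall x c r (sSup A) ⊆ ⋃ t ∈ A, homotheticBall x c r t := by
  intro y hy
  obtain ⟨l, hl, hlA⟩ := exists_Ioc_subset_of_mem_nhds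
    ((isOpen_setOf_mem_homotheticBall y).mem_nhds hy) ⟨sSup A - 1, sub_one_lt _⟩
  obtain ⟨t, htA, hlt⟩ := exists_lt_of_lt_csSup hne hl
  exact mem_iUnion₂.2 ⟨t, htA, hlA ⟨hlt, le_csSup hbdd htA⟩⟩

lemma iInter_homotheticBall_subset_closedBall (T : ℝ) :
    ⋂ t > T, homotheticBall x c r t ⊆ closedBall (AffineMap.lineMap x c T) (T * r) := by
  intro y hy
  have hle : ∀ᶠ t in 𝓝[>] T, dist y (AffineMap.lineMap x c t) ≤ t * r := by
    filter_upwards [self_mem_nhdsWithin] with t ht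
    exact (mem_ball.1 (mem_iInter₂.1 hy t ht)).le
  have hcont : Continuous fun t : ℝ => dist y (AffineMap.lineMap x c t) := by fun_prop
  exact le_of_tendsto_of_tendsto (hcont.continuousWithinAt (s := Ioi T))
    ((continuous_mul_const r).continuousWithinAt (s := Ioi T)) hle

lemma tendsto_mul_const_nhdsGT_zero {a : ℝ} (ha : 0 < a) :
    Tendsto (· * a) (𝓝[>] 0) (𝓝[>] 0) := by
  refine tendsto_nhdsWithin_iff.2 ⟨?_, ?_⟩
  · simpa only [zero_mul] using
      ((continuous_mul_const a).tendsto 0).mono_left nhdsWithin_le_nhds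
  · filter_upwards [self_mem_nhdsWithin] with t ht using mul_pos ht ha

variable [MeasurableSpace X] [BorelSpace X] [SecondCountableTopology X]
  {μ : Measure X} [IsLocallyFiniteMeasure μ] {K : ℝ≥0}

/- Spheres are porous: the balls of radius `t * r / 2` about the points `lineMap x c t` shrink to
the point `x` of the sphere but miss the sphere, so `x` is not a density point of it. -/
lemma BallDoubling.measure_sphere (hμ : BallDoubling μ K) (c : X) {r : ℝ} (hr : r ≠ 0) :
    μ (sphere c r) = 0 := by
  rcases hr.lt_or_gt with hr | hr
  · rw [sphere_eq_empty_of_neg hr, measure_empty]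
  have := hμ.isUnifLocDoublingMeasure
  have hdensity := IsUnifLocDoublingMeasure.ae_tendsto_measure_inter_div μ (sphere c r) 2
  rw [ae_restrict_iff' isClosed_sphere.measurableSet] at hdensity
  refine measure_mono_null ?_ (ae_iff.1 hdensity)
  intro x hx hlim
  have hxc : dist x c = r := hx
  have hlim_one := hlim hx (l := 𝓝[>] (0 : ℝ)) (AffineMap.lineMap x c) (· * (r / 2))
    (tendsto_mul_const_nhdsGT_zero (half_pos hr)) <| by
      filter_upwards [self_mem_nhdsWithin] with t ht
      rw [mem_closedBall, dist_left_lineMap, Real.norm_of_nonneg (le_of_lt ht), hxc]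
      linarith
  have hmiss : ∀ t ∈ Ioc (0 : ℝ) 1,
      sphere c r ∩ closedBall (AffineMap.lineMap x c t) (t * (r / 2)) = ∅ := by
    intro t ht
    have hsub : closedBall (AffineMap.lineMap x c t) (t * (r / 2)) ⊆ ball c r :=
      calc _ ⊆ homotheticBall x c r t := closedBall_subset_ball (by nlinarith [mul_pos ht.1 hr])
        _ ⊆ homotheticBall x c r 1 := homotheticBall_mono hxc.le ht.2
        _ = ball c r := homotheticBall_one
    exact (sphere_disjoint_ball.mono_right hsub).inter_eq
  have hlim_zero := tendsto_const_nhds (x := (0 : ℝ≥0∞)) (f := 𝓝[>] (0 : ℝ))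
  refine zero_ne_one (tendsto_nhds_unique (hlim_zero.congr' ?_) hlim_one)
  filter_upwards [Ioc_mem_nhdsGT one_pos] with t ht
  rw [hmiss t ht, measure_empty, ENNReal.zero_div]

lemma BallDoubling.closedBall_ae_eq_ball (hμ : BallDoubling μ K) (c : X) {r : ℝ} (hr : r ≠ 0) :
    closedBall c r =ᵐ[μ] ball c r := by
  rw [← ball_union_sphere]
  exact union_ae_eq_left_of_ae_eq_empty (ae_eq_empty.2 (hμ.measure_sphere c hr))

lemma BallDoubling.ae_exists_lt_measure_inter_homotheticBall (hμ : BallDoubling μ K)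
    {γ : ℝ≥0∞} (hγ : γ < 1) (E : Set X) (c : X) (r : ℝ) :
    ∀ᵐ x ∂μ.restrict E, x ∈ ball c r → ∃ t ∈ Ioc (0 : ℝ) 1,
      γ * μ (homotheticBall x c r t) < μ (E ∩ homotheticBall x c r t) := by
  have := hμ.isUnifLocDoublingMeasure
  filter_upwards [IsUnifLocDoublingMeasure.ae_tendsto_measure_inter_div μ E 1] with x hlim hx
  have hr : 0 < r := pos_of_mem_ball hx
  replace hlim := hlim (l := 𝓝[>] (0 : ℝ)) (AffineMap.lineMap x c) (· * r)
    (tendsto_mul_const_nhdsGT_zero hr) <| by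
      filter_upwards [self_mem_nhdsWithin] with t ht
      rw [one_mul]
      exact ball_subset_closedBall (mem_homotheticBall_self hx ht)
  obtain ⟨t, hdense, ht⟩ :=
    ((hlim.eventually (lt_mem_nhds hγ)).and (Ioc_mem_nhdsGT one_pos)).exists
  have hball := hμ.closedBall_ae_eq_ball (AffineMap.lineMap x c t) (mul_pos ht.1 hr).ne'
  rw [measure_congr hball, measure_congr ((ae_eq_refl E).inter hball)] at hdense
  exact ⟨t, ht, ENNReal.mul_lt_of_lt_div hdense⟩

lemma BallDoubling.tendsto_measure_homotheticBall_nhdsGT (hμ : BallDoubling μ K)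
    (hx : x ∈ ball c r) {T : ℝ} (hT : T ≠ 0) :
    Tendsto (fun t => μ (homotheticBall x c r t)) (𝓝[>] T) (𝓝 (μ (homotheticBall x c r T))) := by
  have hmono : Monotone (homotheticBall x c r) := homotheticBall_mono (le_of_lt hx)
  have hInter : μ (⋂ t > T, homotheticBall x c r t) = μ (homotheticBall x c r T) := by
    refine le_antisymm ?_ (measure_mono (subset_iInter₂ fun t ht => hmono (le_of_lt ht)))
    exact (measure_mono (iInter_homotheticBall_subset_closedBall T)).trans_eq
      (measure_congr (hμ.closedBall_ae_eq_ball _ (mul_ne_zero hT (pos_of_mem_ball hx).ne')))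
  rw [← hInter]
  exact tendsto_measure_biInter_gt (fun t _ => measurableSet_ball.nullMeasurableSet)
    (fun s t _ hst => hmono hst) ⟨T + 1, lt_add_one T, (hμ.measure_ball_lt_top _ _).ne⟩

lemma BallDoubling.exists_homotheticBall_maximal_dense (hμ : BallDoubling μ K) {γ : ℝ≥0∞}
    (hγ : γ ≠ ∞) {E : Set X} (hx : x ∈ ball c r) (hsparse : μ (E ∩ ball c r) ≤ γ * μ (ball c r))
    (hdense : ∃ t ∈ Ioc (0 : ℝ) 1,
      γ * μ (homotheticBall x c r t) < μ (E ∩ homotheticBall x c r t)) :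
    ∃ T ∈ Ioc (0 : ℝ) 1,
      μ (E ∩ homotheticBall x c r T) ≤ γ * μ (homotheticBall x c r T) ∧
      ∀ y ∈ homotheticBall x c r T, ∃ t ∈ Ioc (0 : ℝ) 1, y ∈ homotheticBall x c r t ∧
        γ * μ (homotheticBall x c r t) < μ (E ∩ homotheticBall x c r t) := by
  have hmono : Monotone (homotheticBall x c r) := homotheticBall_mono (le_of_lt hx)
  set A : Set ℝ := {t | t ∈ Ioc (0 : ℝ) 1 ∧
    γ * μ (homotheticBall x c r t) < μ (E ∩ homotheticBall x c r t)}
  have hne : A.Nonempty := hdense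
  have hbdd : BddAbove A := ⟨1, fun t ht => ht.1.2⟩
  have hpos : 0 < sSup A := hne.elim fun t ht => ht.1.1.trans_le (le_csSup hbdd ht)
  have hle : sSup A ≤ 1 := csSup_le hne fun t ht => ht.1.2
  refine ⟨sSup A, ⟨hpos, hle⟩, ?_, fun y hy => ?_⟩
  · rcases hle.eq_or_lt with hone | hlt
    · rwa [hone, homotheticBall_one]
    refine ge_of_tendsto (ENNReal.Tendsto.const_mul
      (hμ.tendsto_measure_homotheticBall_nhdsGT hx hpos.ne') (Or.inr hγ)) ?_
    filter_upwards [Ioc_mem_nhdsGT hlt] with t ht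
    have htA : t ∉ A := fun h => (le_csSup hbdd h).not_gt ht.1
    have ht_sparse : μ (E ∩ homotheticBall x c r t) ≤ γ * μ (homotheticBall x c r t) :=
      not_lt.1 fun h => htA ⟨⟨hpos.trans ht.1, ht.2⟩, h⟩
    exact (measure_mono (inter_subset_inter_right E (hmono ht.1.le))).trans ht_sparse
  · obtain ⟨t, ht, hyt⟩ := mem_iUnion₂.1 (homotheticBall_sSup_subset hne hbdd hy)
    exact ⟨t, ht.1, hyt, ht.2⟩

end HomotheticBall

lemma one_sub_mul_measure_le_measure_sdiff {α : Type*} [MeasurableSpace α] {μ : Measure α}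
    {γ : ℝ≥0∞} {E B : Set α} (hE : MeasurableSet E) (hB : μ B ≠ ∞) (h : μ (E ∩ B) ≤ γ * μ B) :
    (1 - γ) * μ B ≤ μ (B \ E) := by
  rw [ENNReal.sub_mul fun _ _ => hB, one_mul, tsub_le_iff_left]
  calc μ B = μ (B ∩ E) + μ (B \ E) := (measure_inter_add_sdiff B hE).symm
    _ ≤ γ * μ B + μ (B \ E) := by
        rw [inter_comm]
        gcongr

lemma BallDoubling.one_sub_mul_measure_inter_ball_le {X : Type*} [NormedAddCommGroup X]
    [NormedSpace ℝ X] [MeasurableSpace X] [BorelSpace X] [SecondCountableTopology X]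
    {μ : Measure X} [IsLocallyFiniteMeasure μ] {K : ℝ≥0} (hμ : BallDoubling μ K)
    {γ : ℝ≥0∞} (hγ : γ < 1) {E U : Set X} (hE : MeasurableSet E)
    (hU : ∀ c r, 0 < r → γ * μ (ball c r) < μ (E ∩ ball c r) → ball c r ⊆ U)
    {c : X} {r : ℝ} (hsparse : μ (E ∩ ball c r) ≤ γ * μ (ball c r)) :
    (1 - γ) * μ (E ∩ ball c r) ≤ K ^ 3 * μ ((U ∩ ball c r) \ E) := by
  set s : Set X := {x ∈ E ∩ ball c r | ∃ t ∈ Ioc (0 : ℝ) 1,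
    γ * μ (homotheticBall x c r t) < μ (E ∩ homotheticBall x c r t)}
  have hEs : μ (E ∩ ball c r) ≤ μ s := by
    refine measure_mono_ae ?_
    filter_upwards [(ae_restrict_iff' hE).1
      (hμ.ae_exists_lt_measure_inter_homotheticBall hγ E c r)] with x hx hxE
    exact ⟨hxE, hx hxE.1 hxE.2⟩
  have hcover : ∀ x ∈ s, ∃ c', ∃ r' ∈ Ioc 0 r, x ∈ ball c' r' ∧ ball c' r' ⊆ U ∩ ball c r ∧
      (1 - γ) * μ (ball c' r') ≤ μ.restrict Eᶜ (ball c' r') := by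
    rintro x ⟨⟨-, hx⟩, hdense⟩
    have hr : 0 < r := pos_of_mem_ball hx
    obtain ⟨T, hT, hTsparse, hTdense⟩ :=
      hμ.exists_homotheticBall_maximal_dense (hγ.trans_le le_top).ne hx hsparse hdense
    refine ⟨AffineMap.lineMap x c T, T * r, ⟨mul_pos hT.1 hr, mul_le_of_le_one_left hr.le hT.2⟩,
      mem_homotheticBall_self hx hT.1, subset_inter (fun y hy => ?_) ?_, ?_⟩
    · obtain ⟨t, ht, hyt, htdense⟩ := hTdense y hy
      exact hU _ _ (mul_pos ht.1 hr) htdense hyt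
    · exact (homotheticBall_mono (le_of_lt hx) hT.2).trans_eq homotheticBall_one
    · rw [Measure.restrict_apply measurableSet_ball, ← sdiff_eq]
      exact one_sub_mul_measure_le_measure_sdiff hE (hμ.measure_ball_lt_top _ _).ne hTsparse
  calc (1 - γ) * μ (E ∩ ball c r) ≤ (1 - γ) * μ s := by gcongr
    _ ≤ K ^ 3 * μ.restrict Eᶜ (U ∩ ball c r) := hμ.mul_measure_le_of_forall_mem_ball hcover
    _ = K ^ 3 * μ ((U ∩ ball c r) \ E) := by
        rw [Measure.restrict_apply' hE.compl, ← sdiff_eq]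

section SymmConvexBody

universe u

lemma exists_normedSpace_linearEquiv_norm_eq {E : Type u} [AddCommGroup E] [Module ℝ E]
    (p : Seminorm ℝ E) (hp : ∀ x, p x = 0 ↔ x = 0) :
    ∃ (Y : Type u) (_ : NormedAddCommGroup Y) (_ : NormedSpace ℝ Y) (T : Y ≃ₗ[ℝ] E),
      ∀ y, p (T y) = ‖y‖ := by
  let _ : Norm E := ⟨p⟩
  have hcore : NormedSpace.Core ℝ E :=
    { norm_nonneg := apply_nonneg p
      norm_smul := map_smul_eq_mul p
      norm_triangle := map_add_le_add p
      norm_eq_zero_iff := hp }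
  let _ : NormedAddCommGroup E := .ofCore hcore
  exact ⟨E, inferInstance, .ofCore hcore, .refl ℝ E, fun _ => rfl⟩

lemma exists_continuousLinearEquiv_image_ball_eq {E : Type u} [AddCommGroup E] [Module ℝ E]
    [TopologicalSpace E] [IsTopologicalAddGroup E] [ContinuousSMul ℝ E] [T2Space E]
    [FiniteDimensional ℝ E] {B : Set E} (hzero : 0 ∈ B) (hbdd : Bornology.IsVonNBounded ℝ B)
    (hopen : IsOpen B) (hconv : Convex ℝ B) (hsymm : ∀ x ∈ B, -x ∈ B) :
    ∃ (Y : Type u) (_ : NormedAddCommGroup Y) (_ : NormedSpace ℝ Y) (T : Y ≃L[ℝ] E),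
      T '' ball 0 1 = B := by
  have habs : Absorbent ℝ B := absorbent_nhds_zero (hopen.mem_nhds hzero)
  have hbal : Balanced ℝ B := (balanced_iff_neg_mem hconv).2 fun x hx => hsymm x hx
  obtain ⟨Y, _, _, T, hT⟩ := exists_normedSpace_linearEquiv_norm_eq
    (gaugeSeminorm hbal hconv habs) fun x => gauge_eq_zero habs hbdd
  have : FiniteDimensional ℝ Y := T.symm.finiteDimensional
  refine ⟨Y, _, _, T.toContinuousLinearEquiv, ?_⟩
  have hpreimage : T ⁻¹' B = ball 0 1 := by
    ext y
    rw [mem_ball_zero_iff, ← hT, mem_preimage]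
    nth_rw 1 [← gaugeSeminorm_ball_one (hs₀ := hbal) (hs₁ := hconv) (hs₂ := habs) hopen]
    rw [Seminorm.mem_ball_zero]
  rw [← hpreimage]
  exact image_preimage_eq B T.surjective

lemma image_ball_mul_eq_vadd_smul {Y E : Type*} [NormedAddCommGroup Y] [NormedSpace ℝ Y]
    [AddCommGroup E] [Module ℝ E] (T : Y →ₗ[ℝ] E) (y z : Y) (r : ℝ) {s : ℝ} (hs : 0 < s) :
    T '' ball z (s * r) = (T z - s • T y) +ᵥ s • T '' ball y r := by
  have hball : ball z (s * r) = (z - s • y) +ᵥ s • ball y r := by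
    rw [_root_.smul_ball hs.ne', vadd_ball, vadd_eq_add, sub_add_cancel, Real.norm_of_nonneg hs.le]
  rw [hball, ← image_vadd, image_image, ← image_smul_set, ← image_vadd, image_image]
  simp only [vadd_eq_add, map_add, map_sub, map_smul]

variable {n : ℕ}

/-- A nonempty bounded open convex set which is symmetric about some point. Up to an affine change
of variables these are the balls of the norms on `ℝⁿ`. -/
def IsSymmConvexBody (B : Set (EuclideanSpace ℝ (Fin n))) : Prop :=
  IsConvexBasisSet B ∧ ∃ c, ∀ x ∈ B, Equiv.pointReflection c x ∈ B

lemma IsAxisRect.isSymmConvexBody {R : Set (EuclideanSpace ℝ (Fin n))} (hR : IsAxisRect R) :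
    IsSymmConvexBody R := by
  obtain ⟨a, b, hab, rfl⟩ := hR
  let e := EuclideanSpace.equiv (Fin n) ℝ
  have he : {x : EuclideanSpace ℝ (Fin n) | ∀ i, x i ∈ Ioo (a i) (b i)} =
      e ⁻¹' univ.pi fun i => Ioo (a i) (b i) := by
    ext x
    rw [mem_preimage, mem_univ_pi]
    rfl
  refine ⟨⟨?_, ?_, ?_, ?_⟩, e.symm (midpoint ℝ a b), fun x hx i => ?_⟩
  · rw [he]
    exact (univ_pi_nonempty_iff.2 fun i => nonempty_Ioo.2 (hab i)).preimage e.surjective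
  · rw [he]
    exact e.antilipschitz.isBounded_preimage (.pi fun i => isBounded_Ioo (a i) (b i))
  · rw [he]
    exact (isOpen_set_pi finite_univ fun i _ => isOpen_Ioo).preimage e.continuous
  · rw [he]
    exact (convex_pi fun i _ => convex_Ioo (a i) (b i)).is_linear_preimage e.isLinear
  · have hcenter : e.symm (midpoint ℝ a b) i = (a i + b i) / 2 := by
      change midpoint ℝ a b i = _
      rw [pi_midpoint_apply, midpoint_eq_smul_add, smul_eq_mul, invOf_eq_inv, inv_mul_eq_div]
    obtain ⟨hax, hxb⟩ := hx i
    rw [Equiv.pointReflection_apply, vadd_eq_add, vsub_eq_sub, PiLp.add_apply, PiLp.sub_apply,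
      hcenter]
    constructor <;> linarith

lemma IsSymmConvexBody.image_isometryEquiv {B : Set (EuclideanSpace ℝ (Fin n))}
    (hB : IsSymmConvexBody B) (f : EuclideanSpace ℝ (Fin n) ≃ᵢ EuclideanSpace ℝ (Fin n)) :
    IsSymmConvexBody (f '' B) := by
  obtain ⟨⟨hne, hbdd, hopen, hconv⟩, c, hc⟩ := hB
  let g := f.toRealAffineIsometryEquiv
  refine ⟨⟨hne.image f, f.isometry.lipschitz.isBounded_image hbdd, f.toHomeomorph.isOpenMap _ hopen,
    hconv.affine_image g.toAffineEquiv.toAffineMap⟩, f c, ?_⟩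
  rintro _ ⟨x, hx, rfl⟩
  refine ⟨Equiv.pointReflection c x, hc x hx, ?_⟩
  change g _ = Equiv.pointReflection (g c) (g x)
  rw [Equiv.pointReflection_apply, g.map_vadd, g.map_vsub, Equiv.pointReflection_apply]

lemma IsRect.isSymmConvexBody {R : Set (EuclideanSpace ℝ (Fin n))} (hR : IsRect R) :
    IsSymmConvexBody R := by
  obtain ⟨f, S, hS, rfl⟩ := hR
  exact hS.isSymmConvexBody.image_isometryEquiv f

lemma IsSymmConvexBody.exists_image_ball_eq {B : Set (EuclideanSpace ℝ (Fin n))}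
    (hB : IsSymmConvexBody B) :
    ∃ (Y : Type) (_ : NormedAddCommGroup Y) (_ : NormedSpace ℝ Y)
      (T : Y ≃L[ℝ] EuclideanSpace ℝ (Fin n)) (y : Y), T '' ball y 1 = B := by
  obtain ⟨⟨⟨x, hx⟩, hbdd, hopen, hconv⟩, c, hsymm⟩ := hB
  have hc : c ∈ B := by
    rw [← midpoint_pointReflection_right (R := ℝ) c x]
    exact hconv.midpoint_mem hx (hsymm x hx)
  obtain ⟨Y, _, _, T, hT⟩ := exists_continuousLinearEquiv_image_ball_eq (B := -c +ᵥ B)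
    (mem_vadd_set_iff_neg_vadd_mem.2 (by simpa using hc))
    (NormedSpace.isVonNBounded_iff ℝ |>.2 (hbdd.vadd _)) (hopen.vadd _) (hconv.vadd _) (by
      intro z hz
      rw [mem_vadd_set_iff_neg_vadd_mem, neg_neg, vadd_eq_add] at hz ⊢
      simpa [Equiv.pointReflection_apply, sub_eq_add_neg, add_comm] using hsymm _ hz)
  have hball := image_ball_mul_eq_vadd_smul (T : Y →ₗ[ℝ] EuclideanSpace ℝ (Fin n)) 0 (T.symm c) 1
    one_pos
  refine ⟨Y, _, _, T, T.symm c, ?_⟩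
  simpa [hT] using hball

end SymmConvexBody

section DoublingCollection

variable {n : ℕ} {𝔊 : Set (Set (EuclideanSpace ℝ (Fin n)))}
  {Y : Type*} [NormedAddCommGroup Y] [NormedSpace ℝ Y]

lemma HomothecyInvariant.image_ball_mem (hhom : HomothecyInvariant 𝔊)
    (T : Y →ₗ[ℝ] EuclideanSpace ℝ (Fin n)) {y : Y} (hy : T '' ball y 1 ∈ 𝔊) (z : Y) {r : ℝ}
    (hr : 0 < r) : T '' ball z r ∈ 𝔊 := by
  rw [← mul_one r, image_ball_mul_eq_vadd_smul T y z 1 hr]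
  exact (hhom _ ((hhom _ hy).2 r hr)).1 _

lemma DoublingWrt.ballDoubling_comap [MeasurableSpace Y] [BorelSpace Y]
    {μ : Measure (EuclideanSpace ℝ (Fin n))} {Δ : ℝ} (hdbl : DoublingWrt μ 𝔊 Δ)
    (T : Y ≃L[ℝ] EuclideanSpace ℝ (Fin n)) (hT : ∀ z r, 0 < r → T '' ball z r ∈ 𝔊) :
    BallDoubling (μ.comap T) Δ.toNNReal := by
  intro z r hr
  have hT_emb : MeasurableEmbedding T := T.toHomeomorph.measurableEmbedding
  have himage : T '' ball z (2 * r) = (T z - (2 : ℝ) • T z) +ᵥ (2 : ℝ) • T '' ball z r :=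
    image_ball_mul_eq_vadd_smul (T : Y →ₗ[ℝ] EuclideanSpace ℝ (Fin n)) z z r two_pos
  have hsub : T '' ball z r ⊆ T '' ball z (2 * r) :=
    image_mono (ball_subset_ball (by linarith))
  rw [hT_emb.comap_apply, hT_emb.comap_apply, himage]
  exact hdbl _ (hT z r hr) _ (himage ▸ hsub)

lemma IsSymmConvexBody.one_sub_mul_measure_inter_le {B : Set (EuclideanSpace ℝ (Fin n))}
    (hBody : IsSymmConvexBody B) (hB : B ∈ 𝔊) (hhom : HomothecyInvariant 𝔊)
    {μ : Measure (EuclideanSpace ℝ (Fin n))} [IsLocallyFiniteMeasure μ] {Δ : ℝ}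
    (hdbl : DoublingWrt μ 𝔊 Δ) {γ : ℝ≥0∞} (hγ : γ < 1) {E U : Set (EuclideanSpace ℝ (Fin n))}
    (hE : MeasurableSet E) (hU : ∀ S ∈ 𝔊, γ * μ S < μ (E ∩ S) → S ⊆ U)
    (hsparse : μ (E ∩ B) ≤ γ * μ B) :
    (1 - γ) * μ (E ∩ B) ≤ ENNReal.ofReal Δ ^ 3 * μ ((U ∩ B) \ E) := by
  obtain ⟨Y, _, _, T, y, rfl⟩ := hBody.exists_image_ball_eq
  borelize Y
  have : SecondCountableTopology Y := T.toHomeomorph.secondCountableTopology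
  have : FiniteDimensional ℝ Y := T.symm.toLinearEquiv.finiteDimensional
  have : ProperSpace Y := FiniteDimensional.proper_real Y
  have hT : ∀ z r, 0 < r → T '' ball z r ∈ 𝔊 := fun z r hr =>
    hhom.image_ball_mem (T : Y →ₗ[ℝ] EuclideanSpace ℝ (Fin n)) hB z hr
  have hT_emb : MeasurableEmbedding T := T.toHomeomorph.measurableEmbedding
  have : IsLocallyFiniteMeasure (μ.comap T) := by
    have := IsFiniteMeasureOnCompacts.comap' μ T.continuous hT_emb
    infer_instance
  have himage : ∀ S t, T '' (T ⁻¹' S ∩ t) = S ∩ T '' t := fun S t => by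
    rw [inter_comm, image_inter_preimage, inter_comm]
  have hgrowth := (hdbl.ballDoubling_comap T hT).one_sub_mul_measure_inter_ball_le hγ
    (E := T ⁻¹' E) (U := T ⁻¹' U) (c := y) (r := 1) (T.continuous.measurable hE)
  simp only [hT_emb.comap_apply, image_sdiff T.injective, himage,
    image_preimage_eq _ T.surjective] at hgrowth
  exact hgrowth (fun z r hr hdense => image_subset_iff.1 (hU _ (hT z r hr) hdense)) hsparse

end DoublingCollection

section Halo

variable {n : ℕ} {μ ν : Measure (EuclideanSpace ℝ (Fin n))}
  {𝔊 : Set (Set (EuclideanSpace ℝ (Fin n)))}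

lemma lt_maxOp_iff {f : EuclideanSpace ℝ (Fin n) → ℝ} {t : ℝ≥0∞} {x : EuclideanSpace ℝ (Fin n)} :
    t < maxOp μ 𝔊 f x ↔ ∃ B ∈ 𝔊, x ∈ B ∧ 0 < μ B ∧
      t < (∫⁻ y in B, ENNReal.ofReal |f y| ∂μ) / μ B := by
  simp only [maxOp, lt_iSup_iff, exists_prop]

lemma lt_maxOp_iff_exists_mul_lt (hfin : ∀ B ∈ 𝔊, μ B ≠ ∞) {f : EuclideanSpace ℝ (Fin n) → ℝ}
    {t : ℝ≥0∞} {x : EuclideanSpace ℝ (Fin n)} :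
    t < maxOp μ 𝔊 f x ↔
      ∃ B ∈ 𝔊, x ∈ B ∧ t * μ B < ∫⁻ y in B, ENNReal.ofReal |f y| ∂μ := by
  refine lt_maxOp_iff.trans (exists_congr fun B => and_congr_right fun hB =>
    and_congr_right fun _ => ⟨fun h => ENNReal.mul_lt_of_lt_div h.2, fun h => ?_⟩)
  have hpos : μ B ≠ 0 := by
    intro h0
    rw [setLIntegral_measure_zero B _ h0] at h
    exact not_lt_zero h
  exact ⟨pos_iff_ne_zero.2 hpos,
    (ENNReal.lt_div_iff_mul_lt (.inl hpos) (.inl (hfin B hB))).2 h⟩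

lemma lowerSemicontinuous_maxOp (hopen : ∀ B ∈ 𝔊, IsOpen B) (f : EuclideanSpace ℝ (Fin n) → ℝ) :
    LowerSemicontinuous (maxOp μ 𝔊 f) := by
  intro x t ht
  obtain ⟨B, hB, hxB, h⟩ := lt_maxOp_iff.1 ht
  filter_upwards [(hopen B hB).mem_nhds hxB] with y hyB
  exact lt_maxOp_iff.2 ⟨B, hB, hyB, h⟩

/-- The halo of `E` at level `t`, where `M_{𝔊,μ}(1_E) > t`. The inequality is strict, unlike in
`Hiter`, so that halos of collections of open sets are open. -/
def haloSet (μ : Measure (EuclideanSpace ℝ (Fin n))) (𝔊 : Set (Set (EuclideanSpace ℝ (Fin n))))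
    (t : ℝ≥0∞) (E : Set (EuclideanSpace ℝ (Fin n))) : Set (EuclideanSpace ℝ (Fin n)) :=
  {x | t < maxOp μ 𝔊 (E.indicator 1) x}

/-- One step of the halo iteration: `E` together with its halo at level `t`. -/
def haloStep (μ : Measure (EuclideanSpace ℝ (Fin n))) (𝔊 : Set (Set (EuclideanSpace ℝ (Fin n))))
    (t : ℝ≥0∞) (E : Set (EuclideanSpace ℝ (Fin n))) : Set (EuclideanSpace ℝ (Fin n)) :=
  E ∪ haloSet μ 𝔊 t E

lemma ofReal_abs_indicator_one {α : Type*} (E : Set α) (x : α) :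
    ENNReal.ofReal |E.indicator (1 : α → ℝ) x| = E.indicator 1 x := by
  by_cases hx : x ∈ E <;> simp [hx]

lemma mem_haloSet_iff (hfin : ∀ B ∈ 𝔊, μ B ≠ ∞) {E : Set (EuclideanSpace ℝ (Fin n))}
    (hE : MeasurableSet E) {t : ℝ≥0∞} {x : EuclideanSpace ℝ (Fin n)} :
    x ∈ haloSet μ 𝔊 t E ↔ ∃ B ∈ 𝔊, x ∈ B ∧ t * μ B < μ (E ∩ B) := by
  simp only [haloSet, mem_ofPred_eq, lt_maxOp_iff_exists_mul_lt hfin, ofReal_abs_indicator_one,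
    lintegral_indicator_one hE, Measure.restrict_apply hE]

lemma measurableSet_haloStep (hopen : ∀ B ∈ 𝔊, IsOpen B) (t : ℝ≥0∞)
    {E : Set (EuclideanSpace ℝ (Fin n))} (hE : MeasurableSet E) :
    MeasurableSet (haloStep μ 𝔊 t E) :=
  hE.union ((lowerSemicontinuous_maxOp hopen _).isOpen_preimage t).measurableSet

lemma measurableSet_haloStep_iterate (hopen : ∀ B ∈ 𝔊, IsOpen B) (t : ℝ≥0∞)
    {E : Set (EuclideanSpace ℝ (Fin n))} (hE : MeasurableSet E) (k : ℕ) :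
    MeasurableSet ((haloStep μ 𝔊 t)^[k] E) :=
  Function.Iterate.rec MeasurableSet hE (fun _ => measurableSet_haloStep hopen t) k

lemma TauberianCond.measure_haloStep_iterate_le {γ c : ℝ} (hT : TauberianCond μ ν 𝔊 γ c)
    (hopen : ∀ B ∈ 𝔊, IsOpen B) {E : Set (EuclideanSpace ℝ (Fin n))} (hE : MeasurableSet E)
    (k : ℕ) :
    ν ((haloStep μ 𝔊 (ENNReal.ofReal γ))^[k] E) ≤ (1 + ENNReal.ofReal c) ^ k * ν E := by
  induction k with
  | zero => simp
  | succ k ih =>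
    rw [Function.iterate_succ_apply', pow_succ', mul_assoc]
    set F := (haloStep μ 𝔊 (ENNReal.ofReal γ))^[k] E
    calc ν (haloStep μ 𝔊 (ENNReal.ofReal γ) F)
        ≤ ν F + ν (haloSet μ 𝔊 (ENNReal.ofReal γ) F) := measure_union_le _ _
      _ ≤ ν F + ENNReal.ofReal c * ν F := by
          gcongr
          exact hT F (measurableSet_haloStep_iterate hopen _ hE k)
      _ = (1 + ENNReal.ofReal c) * ν F := by rw [add_mul, one_mul]
      _ ≤ (1 + ENNReal.ofReal c) * ((1 + ENNReal.ofReal c) ^ k * ν E) := by gcongr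

lemma DoublingWrt.subset_haloStep_or_measure_inter_le [IsLocallyFiniteMeasure μ] {Δ : ℝ}
    (hdbl : DoublingWrt μ 𝔊 Δ) (h𝔊 : ∀ B ∈ 𝔊, IsSymmConvexBody B) (hhom : HomothecyInvariant 𝔊)
    {γ : ℝ≥0∞} (hγ : γ < 1) {F B : Set (EuclideanSpace ℝ (Fin n))} (hF : MeasurableSet F)
    (hB : B ∈ 𝔊) :
    B ⊆ haloStep μ 𝔊 γ F ∨
      (1 + (1 - γ) / ENNReal.ofReal Δ ^ 3) * μ (F ∩ B) ≤ μ (haloStep μ 𝔊 γ F ∩ B) := by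
  have hhalo : ∀ S ∈ 𝔊, γ * μ S < μ (F ∩ S) → S ⊆ haloSet μ 𝔊 γ F := fun S hS hdense x hx =>
    (mem_haloSet_iff (fun S hS => (h𝔊 S hS).1.2.1.measure_lt_top.ne) hF).2 ⟨S, hS, hx, hdense⟩
  by_cases hdense : γ * μ B < μ (F ∩ B)
  · exact .inl ((hhalo B hB hdense).trans subset_union_right)
  right
  have hgain : (1 - γ) / ENNReal.ofReal Δ ^ 3 * μ (F ∩ B) ≤ μ ((haloSet μ 𝔊 γ F ∩ B) \ F) := by
    rw [← ENNReal.mul_div_right_comm]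
    exact ENNReal.div_le_of_le_mul' ((h𝔊 B hB).one_sub_mul_measure_inter_le hB hhom hdbl hγ hF
      hhalo (not_lt.1 hdense))
  calc (1 + (1 - γ) / ENNReal.ofReal Δ ^ 3) * μ (F ∩ B)
      ≤ μ (F ∩ B) + μ ((haloSet μ 𝔊 γ F ∩ B) \ F) := by
        rw [add_mul, one_mul]
        gcongr
    _ ≤ μ (haloStep μ 𝔊 γ F ∩ B ∩ F) + μ ((haloStep μ 𝔊 γ F ∩ B) \ F) := by
        refine add_le_add (measure_mono fun y hy => ⟨⟨.inl hy.1, hy.2⟩, hy.1⟩) ?_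
        gcongr
        exact subset_union_right
    _ = μ (haloStep μ 𝔊 γ F ∩ B) := measure_inter_add_sdiff _ hF

lemma haloSet_subset_haloStep_iterate (hopen : ∀ B ∈ 𝔊, IsOpen B) (hfin : ∀ B ∈ 𝔊, μ B ≠ ∞)
    {γ a : ℝ≥0∞}
    (hgrow : ∀ F, MeasurableSet F → ∀ B ∈ 𝔊,
      B ⊆ haloStep μ 𝔊 γ F ∨ a * μ (F ∩ B) ≤ μ (haloStep μ 𝔊 γ F ∩ B))
    {E : Set (EuclideanSpace ℝ (Fin n))} (hE : MeasurableSet E) {t : ℝ≥0∞} {k : ℕ}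
    (hk : 1 ≤ a ^ k * t) :
    haloSet μ 𝔊 t E ⊆ (haloStep μ 𝔊 γ)^[k] E := by
  intro x hx
  obtain ⟨B, hB, hxB, hdense⟩ := (mem_haloSet_iff hfin hE).1 hx
  have hiter : ∀ j, B ⊆ (haloStep μ 𝔊 γ)^[j] E ∨
      a ^ j * μ (E ∩ B) ≤ μ ((haloStep μ 𝔊 γ)^[j] E ∩ B) := by
    intro j
    induction j with
    | zero => simp
    | succ j ih =>
      rw [Function.iterate_succ_apply', pow_succ', mul_assoc]
      rcases ih with hsub | hle
      · exact .inl (hsub.trans subset_union_left)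
      · exact (hgrow _ (measurableSet_haloStep_iterate hopen γ hE j) B hB).imp_right
          (le_trans (by gcongr))
  refine (hiter k).resolve_right (fun hle => hle.not_gt ?_) hxB
  calc μ ((haloStep μ 𝔊 γ)^[k] E ∩ B) ≤ μ B := measure_mono inter_subset_right
    _ < μ (E ∩ B) * a ^ k := by
        have ha : a ^ k ≠ 0 := left_ne_zero_of_mul (one_pos.trans_le hk).ne'
        rw [← ENNReal.div_lt_iff (.inl ha) (.inr (hfin B hB))]
        refine (ENNReal.div_le_of_le_mul' ?_).trans_lt hdense
        rw [← mul_assoc]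
        exact le_mul_of_one_le_left' hk
    _ = a ^ k * μ (E ∩ B) := mul_comm _ _

/-- Restricted weak type at the dyadic levels `2⁻ᵐ`: with `D = 2 ^ q` this reads
`ν {M_{𝔊,μ}(1_E) > λ} ≤ λ ^ (-q) * ν E`. -/
def DyadicRestrictedWeakType (μ ν : Measure (EuclideanSpace ℝ (Fin n)))
    (𝔊 : Set (Set (EuclideanSpace ℝ (Fin n)))) (D : ℝ≥0∞) : Prop :=
  ∀ E, MeasurableSet E → ∀ m : ℕ, ν (haloSet μ 𝔊 (2⁻¹ ^ m) E) ≤ D ^ m * ν E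

theorem TauberianCond.exists_dyadicRestrictedWeakType [IsLocallyFiniteMeasure μ] {γ c : ℝ}
    (hT : TauberianCond μ ν 𝔊 γ c) (hγ : γ < 1) (h𝔊 : ∀ B ∈ 𝔊, IsSymmConvexBody B)
    (hhom : HomothecyInvariant 𝔊) {Δ : ℝ} (hdbl : DoublingWrt μ 𝔊 Δ) :
    ∃ D ≠ ∞, DyadicRestrictedWeakType μ ν 𝔊 D := by
  have hopen : ∀ B ∈ 𝔊, IsOpen B := fun B hB => (h𝔊 B hB).1.2.2.1
  have hγ' : ENNReal.ofReal γ < 1 := ENNReal.ofReal_lt_one.2 hγ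
  set a : ℝ≥0∞ := 1 + (1 - ENNReal.ofReal γ) / ENNReal.ofReal Δ ^ 3
  have ha_one : 1 < a := ENNReal.lt_add_right ENNReal.one_ne_top
    (ENNReal.div_pos (tsub_pos_of_lt hγ').ne' (ENNReal.pow_ne_top ENNReal.ofReal_ne_top)).ne'
  obtain ⟨N, hN⟩ : ∃ N : ℕ, 2 < a ^ N :=
    ((ENNReal.tendsto_pow_atTop_nhds_top_iff.2 ha_one).eventually
      (lt_mem_nhds ENNReal.ofNat_lt_top)).exists
  refine ⟨(1 + ENNReal.ofReal c) ^ N, by finiteness, fun E hE m => ?_⟩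
  have hlevel : 1 ≤ a ^ (N * m) * 2⁻¹ ^ m := by
    rw [pow_mul, ← mul_pow]
    refine one_le_pow₀ ?_
    rw [← div_eq_mul_inv, ENNReal.le_div_iff_mul_le (.inl two_ne_zero) (.inl ENNReal.ofNat_ne_top)]
    simpa using hN.le
  calc ν (haloSet μ 𝔊 (2⁻¹ ^ m) E)
      ≤ ν ((haloStep μ 𝔊 (ENNReal.ofReal γ))^[N * m] E) :=
        measure_mono (haloSet_subset_haloStep_iterate hopen
          (fun B hB => (h𝔊 B hB).1.2.1.measure_lt_top.ne)
          (fun F hF B hB => hdbl.subset_haloStep_or_measure_inter_le h𝔊 hhom hγ' hF hB) hE hlevel)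
    _ ≤ ((1 + ENNReal.ofReal c) ^ N) ^ m * ν E := by
        rw [← pow_mul]
        exact hT.measure_haloStep_iterate_le hopen hE _

end Halo

section DyadicSums

lemma two_zpow_rpow (k : ℤ) (p : ℝ) : ((2 : ℝ≥0∞) ^ k) ^ p = (2 ^ p) ^ k := by
  rw [← ENNReal.rpow_intCast, ← ENNReal.rpow_intCast, ← ENNReal.rpow_mul, ← ENNReal.rpow_mul,
    mul_comm]

lemma one_lt_two_rpow {p : ℝ} (hp : 0 < p) : (1 : ℝ≥0∞) < 2 ^ p :=
  ENNReal.one_lt_rpow ENNReal.one_lt_two hp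

lemma two_rpow_ne_top {p : ℝ} (hp : 0 < p) : (2 : ℝ≥0∞) ^ p ≠ ∞ :=
  ENNReal.rpow_ne_top_of_nonneg hp.le ENNReal.ofNat_ne_top

lemma rpow_le_tsum_two_zpow_lt {p : ℝ} (hp : 0 < p) (y : ℝ≥0∞) :
    y ^ p ≤ ∑' k : ℤ, if 2 ^ k < y then (2 ^ p) ^ (k + 1) else 0 := by
  rcases eq_or_ne y 0 with rfl | hy0
  · simp [hp]
  rcases eq_or_ne y ∞ with rfl | hytop
  · have hterm : ∀ k : ℕ, (1 : ℝ≥0∞) ≤ if 2 ^ (k : ℤ) < ∞ then (2 ^ p) ^ ((k : ℤ) + 1) else 0 := by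
      intro k
      rw [if_pos (ENNReal.zpow_lt_top two_ne_zero ENNReal.ofNat_ne_top _)]
      exact_mod_cast one_le_pow₀ (one_lt_two_rpow hp).le
    calc ∞ ^ p ≤ ∑' _ : ℕ, (1 : ℝ≥0∞) := by simp
      _ ≤ ∑' k : ℕ, if 2 ^ (k : ℤ) < ∞ then (2 ^ p) ^ ((k : ℤ) + 1) else 0 :=
          ENNReal.tsum_le_tsum hterm
      _ ≤ ∑' k : ℤ, if 2 ^ k < ∞ then (2 ^ p) ^ (k + 1) else 0 :=
          ENNReal.tsum_comp_le_tsum_of_injective Nat.cast_injective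
            fun k : ℤ => if (2 : ℝ≥0∞) ^ k < ∞ then (2 ^ p) ^ (k + 1) else 0
  obtain ⟨k, hlt, hle⟩ :=
    ENNReal.exists_mem_Ioc_zpow hy0 hytop ENNReal.one_lt_two ENNReal.ofNat_ne_top
  refine le_trans ?_ (ENNReal.le_tsum k)
  rw [if_pos hlt, ← two_zpow_rpow]
  exact ENNReal.rpow_le_rpow hle hp.le

lemma tsum_two_zpow_lt_le {p : ℝ} (hp : 0 < p) (y : ℝ≥0∞) :
    ∑' k : ℤ, (if 2 ^ k < y then (2 ^ p) ^ k else 0) ≤ (1 - (2 ^ p)⁻¹)⁻¹ * y ^ p := by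
  rcases eq_or_ne y 0 with rfl | hy0
  · simp
  rcases eq_or_ne y ∞ with rfl | hytop
  · simp [hp, ENNReal.mul_top]
  obtain ⟨k, hlt, hle⟩ :=
    ENNReal.exists_mem_Ioc_zpow hy0 hytop ENNReal.one_lt_two ENNReal.ofNat_ne_top
  have hw_zero : (2 : ℝ≥0∞) ^ p ≠ 0 := (one_pos.trans (one_lt_two_rpow hp)).ne'
  have hw_top : (2 : ℝ≥0∞) ^ p ≠ ∞ := two_rpow_ne_top hp
  have hinj : Function.Injective fun i : ℕ => k - i := fun i j hij => by simpa using hij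
  rw [← hinj.tsum_eq]
  · calc ∑' i : ℕ, (if 2 ^ (k - i : ℤ) < y then (2 ^ p) ^ (k - i : ℤ) else 0)
        ≤ ∑' i : ℕ, y ^ p * (2 ^ p)⁻¹ ^ i := by
          refine ENNReal.tsum_le_tsum fun i => ?_
          split_ifs
          swap
          · exact zero_le
          rw [ENNReal.zpow_sub hw_zero hw_top, ← two_zpow_rpow, zpow_natCast, ENNReal.inv_pow]
          gcongr
      _ = (1 - (2 ^ p)⁻¹)⁻¹ * y ^ p := by
          rw [ENNReal.tsum_mul_left, ENNReal.tsum_geometric, mul_comm]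
  · intro l hl
    have hly : (2 : ℝ≥0∞) ^ l < y := by
      by_contra h
      exact hl (if_neg h)
    have hlk : l < k + 1 :=
      (ENNReal.monotone_zpow one_le_two).reflect_lt (hly.trans_le hle)
    exact ⟨(k - l).toNat, by grind⟩

lemma le_two_zpow_add_tsum (k : ℤ) {y : ℝ≥0∞} (hy : y ≠ ∞) :
    y ≤ 2 ^ k + ∑' j : ℕ, if 2 ^ (k + j) < y then 2 ^ (k + j + 1) else 0 := by
  rcases le_or_gt y (2 ^ k) with hky | hky
  · exact hky.trans le_self_add
  obtain ⟨l, hlt, hle⟩ :=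
    ENNReal.exists_mem_Ioc_zpow (ne_bot_of_gt hky) hy ENNReal.one_lt_two ENNReal.ofNat_ne_top
  have hkl : k < l + 1 := (ENNReal.monotone_zpow one_le_two).reflect_lt (hky.trans_le hle)
  obtain ⟨j, rfl⟩ := Int.le.dest (Int.lt_add_one_iff.1 hkl)
  refine le_add_left (le_trans ?_ (ENNReal.le_tsum j))
  rwa [if_pos hlt]

lemma tsum_zpow_mul_tsum_shift {w : ℝ≥0∞} (hw0 : w ≠ 0) (hwtop : w ≠ ∞) (d : ℝ≥0∞)
    (u : ℤ → ℝ≥0∞) :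
    ∑' k : ℤ, w ^ k * ∑' j : ℕ, d ^ j * u (k + j) = (1 - d * w⁻¹)⁻¹ * ∑' l : ℤ, w ^ l * u l := by
  have hshift : ∀ j : ℕ, ∑' k : ℤ, w ^ k * (d ^ j * u (k + j)) =
      (d * w⁻¹) ^ j * ∑' l : ℤ, w ^ l * u l := by
    intro j
    rw [← ENNReal.tsum_mul_left, ← (Equiv.addRight (j : ℤ)).tsum_eq fun l =>
      (d * w⁻¹) ^ j * (w ^ l * u l)]
    refine tsum_congr fun k => ?_
    have hcancel : w⁻¹ ^ j * w ^ j = 1 := by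
      rw [← mul_pow, ENNReal.inv_mul_cancel hw0 hwtop, one_pow]
    calc w ^ k * (d ^ j * u (k + j)) = d ^ j * (w⁻¹ ^ j * w ^ j) * (w ^ k * u (k + j)) := by
          rw [hcancel]; ring
      _ = (d * w⁻¹) ^ j * (w ^ (k + j) * u (k + j)) := by
          rw [ENNReal.zpow_add hw0 hwtop, zpow_natCast, mul_pow]; ring
  rw [tsum_congr fun k => ENNReal.tsum_mul_left.symm, ENNReal.tsum_comm, tsum_congr hshift,
    ENNReal.tsum_mul_right, ENNReal.tsum_geometric]

variable {α : Type*} [MeasurableSpace α] {ρ : Measure α} {g : α → ℝ≥0∞}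

lemma lintegral_tsum_ite_lt {ι : Type*} [Countable ι] (hg : Measurable g) (a b : ι → ℝ≥0∞) :
    ∫⁻ x, ∑' i, (if a i < g x then b i else 0) ∂ρ = ∑' i, b i * ρ {x | a i < g x} := by
  have hlevel : ∀ i, MeasurableSet {x | a i < g x} := fun i => measurableSet_lt measurable_const hg
  rw [lintegral_tsum fun i =>
    (Measurable.ite (hlevel i) measurable_const measurable_const).aemeasurable]
  refine tsum_congr fun i => ?_
  rw [← lintegral_indicator_const (hlevel i)]
  simp only [indicator_apply, mem_ofPred_eq]

lemma lintegral_rpow_le_tsum (hg : Measurable g) {p : ℝ} (hp : 0 < p) :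
    ∫⁻ x, g x ^ p ∂ρ ≤ ∑' k : ℤ, (2 ^ p) ^ (k + 1) * ρ {x | 2 ^ k < g x} := by
  rw [← lintegral_tsum_ite_lt hg]
  exact lintegral_mono fun x => rpow_le_tsum_two_zpow_lt hp (g x)

lemma tsum_le_lintegral_rpow (hg : Measurable g) {p : ℝ} (hp : 0 < p) :
    ∑' k : ℤ, (2 ^ p) ^ k * ρ {x | 2 ^ k < g x} ≤ (1 - (2 ^ p)⁻¹)⁻¹ * ∫⁻ x, g x ^ p ∂ρ := by
  rw [← lintegral_tsum_ite_lt hg, ← lintegral_const_mul _ (hg.pow_const p)]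
  exact lintegral_mono fun x => tsum_two_zpow_lt_le hp (g x)

lemma lintegral_le_two_zpow_mul_measure_univ (hg : Measurable g) (hfin : ∀ x, g x ≠ ∞) (k : ℤ)
    (hlevel : ∀ j : ℕ, ρ {x | 2 ^ (k + j) < g x} ≤ 2⁻¹ ^ (2 * j) * ρ univ) :
    ∫⁻ x, g x ∂ρ ≤ 2 ^ (k + 3) * ρ univ := by
  have hterm : ∀ j : ℕ, (2 : ℝ≥0∞) ^ (k + j + 1) * 2⁻¹ ^ (2 * j) = 2 ^ (k + 1) * 2⁻¹ ^ j := by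
    intro j
    have hcancel : (2 : ℝ≥0∞) ^ j * 2⁻¹ ^ j = 1 := by
      rw [← mul_pow, ENNReal.mul_inv_cancel two_ne_zero ENNReal.ofNat_ne_top, one_pow]
    rw [add_right_comm, ENNReal.zpow_add two_ne_zero ENNReal.ofNat_ne_top (k + 1), zpow_natCast,
      two_mul, pow_add, mul_assoc, ← mul_assoc (2 ^ j), hcancel, one_mul]
  have hstep : ∀ l : ℤ, (2 : ℝ≥0∞) ^ (l + 1) = 2 ^ l * 2 := fun l => by
    rw [ENNReal.zpow_add two_ne_zero ENNReal.ofNat_ne_top, zpow_one]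
  calc ∫⁻ x, g x ∂ρ
      ≤ ∫⁻ x, (2 ^ k + ∑' j : ℕ, if 2 ^ (k + j) < g x then 2 ^ (k + j + 1) else 0) ∂ρ :=
        lintegral_mono fun x => le_two_zpow_add_tsum k (hfin x)
    _ = 2 ^ k * ρ univ + ∑' j : ℕ, 2 ^ (k + j + 1) * ρ {x | 2 ^ (k + j) < g x} := by
        rw [lintegral_add_left measurable_const, lintegral_const, lintegral_tsum_ite_lt hg]
    _ ≤ 2 ^ k * ρ univ + ∑' j : ℕ, 2 ^ (k + j + 1) * (2⁻¹ ^ (2 * j) * ρ univ) := by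
        gcongr with j
        exact hlevel j
    _ = 2 ^ k * ρ univ + 2 ^ (k + 1 + 1) * ρ univ := by
        simp_rw [← mul_assoc, hterm, ENNReal.tsum_mul_right, ENNReal.tsum_mul_left,
          ENNReal.tsum_geometric_two, hstep]
    _ ≤ 2 ^ (k + 1 + 1) * ρ univ + 2 ^ (k + 1 + 1) * ρ univ := by
        have hmono : (2 : ℝ≥0∞) ^ k ≤ 2 ^ (k + 1 + 1) := ENNReal.monotone_zpow one_le_two (by lia)
        gcongr
    _ = 2 ^ (k + 3) * ρ univ := by
        rw [← mul_two, mul_right_comm, ← hstep, show k + 1 + 1 + 1 = k + 3 by ring]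

end DyadicSums

section LpBounds

variable {n : ℕ} {μ ν : Measure (EuclideanSpace ℝ (Fin n))}
  {𝔊 : Set (Set (EuclideanSpace ℝ (Fin n)))}

lemma exists_mem_haloSet_of_two_zpow_lt_maxOp (hfin : ∀ B ∈ 𝔊, μ B ≠ ∞)
    {f : EuclideanSpace ℝ (Fin n) → ℝ} (hf : Measurable f) {k : ℤ}
    {x : EuclideanSpace ℝ (Fin n)} (hx : 2 ^ (k + 3) < maxOp μ 𝔊 f x) :
    ∃ j : ℕ, x ∈ haloSet μ 𝔊 (2⁻¹ ^ (2 * j)) {y | 2 ^ (k + j) < ENNReal.ofReal |f y|} := by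
  have hg : Measurable fun y => ENNReal.ofReal |f y| := by fun_prop
  have hlevel : ∀ j : ℕ, MeasurableSet {y | 2 ^ (k + j) < ENNReal.ofReal |f y|} := fun j =>
    measurableSet_lt measurable_const hg
  obtain ⟨B, hB, hxB, hlarge⟩ := (lt_maxOp_iff_exists_mul_lt hfin).1 hx
  by_contra! hsmall
  refine hlarge.not_ge ?_
  rw [← Measure.restrict_apply_univ B]
  refine lintegral_le_two_zpow_mul_measure_univ hg (fun _ => ENNReal.ofReal_ne_top) k fun j => ?_
  rw [Measure.restrict_apply (hlevel j), Measure.restrict_apply_univ, ← not_lt]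
  exact fun hdense => hsmall j ((mem_haloSet_iff hfin (hlevel j)).2 ⟨B, hB, hxB, hdense⟩)

lemma DyadicRestrictedWeakType.measure_two_zpow_lt_maxOp_le {D : ℝ≥0∞}
    (hD : DyadicRestrictedWeakType μ ν 𝔊 D) (hfin : ∀ B ∈ 𝔊, μ B ≠ ∞)
    {f : EuclideanSpace ℝ (Fin n) → ℝ} (hf : Measurable f) (k : ℤ) :
    ν {x | 2 ^ (k + 3) < maxOp μ 𝔊 f x} ≤
      ∑' j : ℕ, (D ^ 2) ^ j * ν {y | 2 ^ (k + j) < ENNReal.ofReal |f y|} := by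
  calc ν {x | 2 ^ (k + 3) < maxOp μ 𝔊 f x}
      ≤ ν (⋃ j : ℕ, haloSet μ 𝔊 (2⁻¹ ^ (2 * j)) {y | 2 ^ (k + j) < ENNReal.ofReal |f y|}) :=
        measure_mono fun x hx =>
          mem_iUnion.2 (exists_mem_haloSet_of_two_zpow_lt_maxOp hfin hf hx)
    _ ≤ ∑' j : ℕ, ν (haloSet μ 𝔊 (2⁻¹ ^ (2 * j)) {y | 2 ^ (k + j) < ENNReal.ofReal |f y|}) :=
        measure_iUnion_le _
    _ ≤ ∑' j : ℕ, (D ^ 2) ^ j * ν {y | 2 ^ (k + j) < ENNReal.ofReal |f y|} := by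
        refine ENNReal.tsum_le_tsum fun j => ?_
        rw [← pow_mul]
        exact hD _ (measurableSet_lt measurable_const (by fun_prop)) (2 * j)

theorem DyadicRestrictedWeakType.boundedOnLp {D : ℝ≥0∞} (hD : DyadicRestrictedWeakType μ ν 𝔊 D)
    (hopen : ∀ B ∈ 𝔊, IsOpen B) (hfin : ∀ B ∈ 𝔊, μ B ≠ ∞) {p : ℝ} (hp : 0 < p)
    (hDp : D ^ 2 < 2 ^ p) : BoundedOnLp μ ν 𝔊 p := by
  set w : ℝ≥0∞ := 2 ^ p
  have hw_one : 1 < w := one_lt_two_rpow hp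
  have hw_top : w ≠ ∞ := two_rpow_ne_top hp
  have hw_zero : w ≠ 0 := (one_pos.trans hw_one).ne'
  have hratio : D ^ 2 * w⁻¹ < 1 := by
    rwa [← div_eq_mul_inv, ENNReal.div_lt_iff (.inl hw_zero) (.inl hw_top), one_mul]
  refine ⟨w ^ 4 * (1 - D ^ 2 * w⁻¹)⁻¹ * (1 - w⁻¹)⁻¹, ?_, fun f hf => ?_⟩
  · have hratio' : 1 - D ^ 2 * w⁻¹ ≠ 0 := (tsub_pos_of_lt hratio).ne'
    have hw' : 1 - w⁻¹ ≠ 0 := (tsub_pos_of_lt (ENNReal.inv_lt_one.2 hw_one)).ne'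
    finiteness
  have hM : Measurable (maxOp μ 𝔊 f) := (lowerSemicontinuous_maxOp hopen f).measurable
  calc ∫⁻ x, maxOp μ 𝔊 f x ^ p ∂ν
      ≤ ∑' k : ℤ, w ^ (k + 1) * ν {x | 2 ^ k < maxOp μ 𝔊 f x} := lintegral_rpow_le_tsum hM hp
    _ = ∑' k : ℤ, w ^ 4 * (w ^ k * ν {x | 2 ^ (k + 3) < maxOp μ 𝔊 f x}) := by
        rw [← (Equiv.addRight (3 : ℤ)).tsum_eq]
        refine tsum_congr fun k => ?_
        rw [Equiv.coe_addRight, show k + 3 + 1 = (4 : ℕ) + k by push_cast; ring,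
          ENNReal.zpow_add hw_zero hw_top, zpow_natCast, mul_assoc]
    _ ≤ w ^ 4 * ∑' k : ℤ, w ^ k *
          ∑' j : ℕ, (D ^ 2) ^ j * ν {y | 2 ^ (k + j) < ENNReal.ofReal |f y|} := by
        rw [ENNReal.tsum_mul_left]
        gcongr with k
        exact hD.measure_two_zpow_lt_maxOp_le hfin hf k
    _ = w ^ 4 * (1 - D ^ 2 * w⁻¹)⁻¹ *
          ∑' l : ℤ, w ^ l * ν {y | 2 ^ l < ENNReal.ofReal |f y|} := by
        rw [mul_assoc, tsum_zpow_mul_tsum_shift hw_zero hw_top (D ^ 2) fun l =>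
          ν {y | 2 ^ l < ENNReal.ofReal |f y|}]
    _ ≤ w ^ 4 * (1 - D ^ 2 * w⁻¹)⁻¹ *
          ((1 - w⁻¹)⁻¹ * ∫⁻ x, ENNReal.ofReal |f x| ^ p ∂ν) := by
        gcongr
        exact tsum_le_lintegral_rpow (by fun_prop) hp
    _ = w ^ 4 * (1 - D ^ 2 * w⁻¹)⁻¹ * (1 - w⁻¹)⁻¹ * ∫⁻ x, ENNReal.ofReal |f x| ^ p ∂ν :=
        (mul_assoc _ _ _).symm

theorem BoundedOnLp.exists_tauberianCond {p : ℝ} (hb : BoundedOnLp μ ν 𝔊 p)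
    (hopen : ∀ B ∈ 𝔊, IsOpen B) (hp : 0 < p) {γ : ℝ} (hγ : 0 < γ) :
    ∃ c : ℝ, 0 < c ∧ TauberianCond μ ν 𝔊 γ c := by
  obtain ⟨C, hC, hb⟩ := hb
  set t : ℝ≥0∞ := ENNReal.ofReal γ ^ p
  have ht_zero : t ≠ 0 := (ENNReal.rpow_pos (ENNReal.ofReal_pos.2 hγ) ENNReal.ofReal_ne_top).ne'
  have ht_top : t ≠ ∞ := ENNReal.rpow_ne_top_of_nonneg hp.le ENNReal.ofReal_ne_top
  refine ⟨(C / t).toReal + 1, by positivity, fun E hE => ?_⟩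
  have hM : Measurable (maxOp μ 𝔊 (E.indicator 1)) :=
    (lowerSemicontinuous_maxOp hopen _).measurable
  have hchebyshev : t * ν (haloSet μ 𝔊 (ENNReal.ofReal γ) E) ≤ C * ν E :=
    calc t * ν (haloSet μ 𝔊 (ENNReal.ofReal γ) E)
        ≤ t * ν {x | t ≤ maxOp μ 𝔊 (E.indicator 1) x ^ p} := by
          gcongr
          exact fun x hx => ENNReal.rpow_le_rpow hx.le hp.le
      _ ≤ ∫⁻ x, maxOp μ 𝔊 (E.indicator 1) x ^ p ∂ν :=
          mul_meas_ge_le_lintegral (hM.pow_const p) t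
      _ ≤ C * ∫⁻ x, ENNReal.ofReal |E.indicator 1 x| ^ p ∂ν :=
          hb _ (measurable_one.indicator hE)
      _ = C * ∫⁻ x, E.indicator 1 x ∂ν := by
          congr 1
          refine lintegral_congr fun x => ?_
          by_cases hx : x ∈ E <;> simp [hx, hp]
      _ = C * ν E := by rw [lintegral_indicator_one hE]
  calc ν (haloSet μ 𝔊 (ENNReal.ofReal γ) E)
      ≤ C / t * ν E := by
        rwa [← ENNReal.mul_div_right_comm,
          ENNReal.le_div_iff_mul_le (.inl ht_zero) (.inl ht_top), mul_comm]
    _ ≤ ENNReal.ofReal ((C / t).toReal + 1) * ν E := by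
        gcongr
        exact (ENNReal.le_ofReal_iff_toReal_le (by finiteness) (by positivity)).2 (by linarith)

theorem DyadicRestrictedWeakType.exists_boundedOnLp {D : ℝ≥0∞}
    (hD : DyadicRestrictedWeakType μ ν 𝔊 D) (hD_top : D ≠ ∞)
    (hopen : ∀ B ∈ 𝔊, IsOpen B) (hfin : ∀ B ∈ 𝔊, μ B ≠ ∞) :
    ∃ p₀ : ℝ, 1 < p₀ ∧ ∀ p, p₀ < p → BoundedOnLp μ ν 𝔊 p := by
  obtain ⟨N, hN⟩ : ∃ N : ℕ, D ^ 2 < 2 ^ N :=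
    ((ENNReal.tendsto_pow_atTop_nhds_top_iff.2 ENNReal.one_lt_two).eventually
      (lt_mem_nhds (ENNReal.pow_lt_top hD_top.lt_top))).exists
  refine ⟨max N 2, one_lt_two.trans_le (le_max_right _ _), fun p hp => ?_⟩
  obtain ⟨hNp, h2p⟩ := max_lt_iff.1 hp
  refine hD.boundedOnLp hopen hfin (two_pos.trans h2p) (hN.trans_le ?_)
  rw [← ENNReal.rpow_natCast]
  exact ENNReal.rpow_le_rpow_of_exponent_le one_le_two hNp.le

end LpBounds

theorem statement5_general {n : ℕ} {𝔊 : Set (Set (EuclideanSpace ℝ (Fin n)))}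
    (h𝔊 : ∀ B ∈ 𝔊, IsSymmConvexBody B) (hhom : HomothecyInvariant 𝔊)
    (μ ν : Measure (EuclideanSpace ℝ (Fin n))) [IsLocallyFiniteMeasure μ]
    {Δ : ℝ} (hdbl : DoublingWrt μ 𝔊 Δ) :
    (∃ γ ∈ Set.Ioo (0 : ℝ) 1, ∃ c : ℝ, 0 < c ∧ TauberianCond μ ν 𝔊 γ c)
    ↔ (∃ p₀ : ℝ, 1 < p₀ ∧ ∀ p : ℝ, p₀ < p → BoundedOnLp μ ν 𝔊 p) := by
  have hopen : ∀ B ∈ 𝔊, IsOpen B := fun B hB => (h𝔊 B hB).1.2.2.1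
  have hfin : ∀ B ∈ 𝔊, μ B ≠ ∞ := fun B hB => (h𝔊 B hB).1.2.1.measure_lt_top.ne
  constructor
  · rintro ⟨γ, hγ, c, -, hT⟩
    obtain ⟨D, hD_top, hD⟩ := hT.exists_dyadicRestrictedWeakType hγ.2 h𝔊 hhom hdbl
    exact hD.exists_boundedOnLp hD_top hopen hfin
  · rintro ⟨p₀, hp₀, hb⟩
    exact ⟨1 / 2, by norm_num, (hb (p₀ + 1) (by linarith)).exists_tauberianCond hopen
      (by linarith) (by norm_num)⟩

/-- For a homothecy invariant collection `𝔊` of open rectangles (not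
necessarily axis-parallel) and locally finite Borel measures `μ, ν` with `μ` nonzero and
doubling w.r.t. `𝔊`: the Tauberian condition at some fixed level `γ ∈ (0,1)` for
`M_{𝔊,μ}` w.r.t. `ν` holds iff there is `p₀ > 1` such that `M_{𝔊,μ}` is bounded on
`L^p(ν)` for all `p > p₀`. -/
theorem statement5 (n : ℕ) (𝔊 : Set (Set (EuclideanSpace ℝ (Fin n))))
    (hG : ∀ R ∈ 𝔊, IsRect R) (hhom : HomothecyInvariant 𝔊)
    (μ ν : Measure (EuclideanSpace ℝ (Fin n)))
    (hlocμ : IsLocallyFiniteMeasure μ) (hlocν : IsLocallyFiniteMeasure ν)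
    (hμ : μ ≠ 0) (hdbl : ∃ Δ : ℝ, 1 < Δ ∧ DoublingWrt μ 𝔊 Δ) :
    (∃ γ ∈ Set.Ioo (0 : ℝ) 1, ∃ c : ℝ, 0 < c ∧ TauberianCond μ ν 𝔊 γ c)
    ↔ (∃ p₀ : ℝ, 1 < p₀ ∧ ∀ p : ℝ, p₀ < p → BoundedOnLp μ ν 𝔊 p) :=
  let ⟨_, _, hdbl⟩ := hdbl
  statement5_general (fun R hR => (hG R hR).isSymmConvexBody) hhom μ ν hdbl
end

section
/- Let 𝔊 be a homothecy invariant collection of open rectangles in ℝⁿ, let μ be a nonzero locally finite nonnegative Borel measure doubling with respect to 𝔊 with constant Δ_μ, and fix β ∈ (0,1). Suppose E ⊆ ℝⁿ is a Borel set, R ∈ 𝔊, μ(R) > 0, and μ(E ∩ R)/μ(R) = α for some α ∈ (0,β). Then R ⊆ H_β^{k_{α,β}}(E), where k_{α,β} = ⌈ log₂(β/α) / log₂(1/β) ⌉ · ⌈ 2 + log₂⁺(β·Δ_μ) / log₂(1/β) ⌉ + 1, with log⁺ t = max(log₂ t, 0) and ⌈x⌉ the least integer ≥ x. -/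
open MeasureTheory Set Filter
open scoped ENNReal Topology Pointwise

/-!
Pull `μ` back along the affine isomorphism that maps the unit cube, a ball of the sup norm, onto
`R`; then all cubes are homothetic copies of `R`, and the pulled-back measure is doubling on them.
Lebesgue density makes spheres null for a doubling measure, so the measure of a cube varies
continuously while the cube grows from a subcube to its parent. If a halo fills the subcube up to
proportion `β`, each further halo swallows a cube of measure `1 / β` times larger, and the parent is
reached after `i + 1` steps as soon as `Δ * β ^ i ≤ 1`.

Let `A` be a halo with `μ (A ∩ R) ≤ β * μ R`. Bisecting `R` dyadically until `A` has proportion at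
least `β` in a subcube, the parents of these stopping cubes cover almost all of `A ∩ R`; in each
parent `A` has proportion at most `β`, while the halo `A'` obtained `i + 1` steps later contains it.
Hence `μ (A ∩ R) ≤ β * μ (A' ∩ R)`, and iterating this gain raises the proportion of the halos in
`R` from `α` to `β`; one last halo contains `R`.
-/

open Metric
open scoped NNReal

section DoublingMeasure

section PseudoMetricSpace

variable {X : Type*} [PseudoMetricSpace X] [MeasurableSpace X] {μ : Measure X} {C : ℝ≥0}

/-- Doubling of a measure on open balls: doubling the radius of a ball `B` and moving its centre,
as long as the new ball still contains `B`, multiplies the measure by at most `C`. The centre is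
allowed to move because a dyadic subcube is not concentric with its parent. -/
def IsBallDoubling (μ : Measure X) (C : ℝ≥0) : Prop :=
  ∀ ⦃c c' : X⦄ ⦃r : ℝ⦄, 0 < r → ball c' r ⊆ ball c (2 * r) →
    μ (ball c (2 * r)) ≤ C * μ (ball c' r)

theorem IsBallDoubling.measure_ball_two_mul_le (h : IsBallDoubling μ C) (x : X) {r : ℝ}
    (hr : 0 < r) : μ (ball x (2 * r)) ≤ C * μ (ball x r) :=
  h hr (ball_subset_ball (by linarith))

theorem IsBallDoubling.isUnifLocDoublingMeasure (h : IsBallDoubling μ C) :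
    IsUnifLocDoublingMeasure μ := by
  refine ⟨C * C, ?_⟩
  filter_upwards [self_mem_nhdsWithin] with r (hr : 0 < r) x
  calc μ (closedBall x (2 * r)) ≤ μ (ball x (2 * (2 * r))) :=
        measure_mono (closedBall_subset_ball (by linarith))
    _ ≤ C * μ (ball x (2 * r)) := h.measure_ball_two_mul_le x (by positivity)
    _ ≤ C * (C * μ (ball x r)) := by gcongr; exact h.measure_ball_two_mul_le x hr
    _ ≤ C * (C * μ (closedBall x r)) := by gcongr; exact ball_subset_closedBall
    _ = ↑(C * C) * μ (closedBall x r) := by push_cast; ring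

theorem IsBallDoubling.measure_ball_pos (h : IsBallDoubling μ C) {c : X} {R : ℝ}
    (hc : 0 < μ (ball c R)) (x : X) {r : ℝ} (hr : 0 < r) : 0 < μ (ball x r) := by
  rw [pos_iff_ne_zero] at hc ⊢
  contrapose hc
  have hnull : ∀ k : ℕ, μ (ball x (2 ^ k * r)) = 0 := by
    intro k
    induction k with
    | zero => simpa using hc
    | succ k ih =>
      rw [pow_succ', mul_assoc, ← nonpos_iff_eq_zero]
      simpa [ih] using h.measure_ball_two_mul_le x (r := 2 ^ k * r) (by positivity)
  obtain ⟨k, hk⟩ := pow_unbounded_of_one_lt ((R + dist c x) / r) one_lt_two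
  rw [div_lt_iff₀ hr] at hk
  exact measure_mono_null (ball_subset_ball' hk.le) (hnull k)

theorem measure_eq_zero_of_porous [SecondCountableTopology X] [BorelSpace X]
    [IsLocallyFiniteMeasure μ] [IsUnifLocDoublingMeasure μ] {S : Set X} (hS : MeasurableSet S)
    {K : ℝ}
    (hporous : ∀ x ∈ S, ∀ δ > 0, ∃ y, dist x y ≤ K * δ ∧ Disjoint S (closedBall y δ)) :
    μ S = 0 := by
  have hdensity := IsUnifLocDoublingMeasure.ae_tendsto_measure_inter_div μ S K
  rw [ae_restrict_iff' hS] at hdensity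
  rw [measure_eq_zero_iff_ae_notMem]
  filter_upwards [hdensity] with x hx hxS
  have : Nonempty X := ⟨x⟩
  choose! y hxy hdisj using hporous x hxS
  have hone := hx hxS y id tendsto_id
    (eventually_mem_nhdsWithin.mono fun δ hδ => mem_closedBall.2 (hxy δ hδ))
  have hzero : Tendsto (fun δ => μ (S ∩ closedBall (y δ) δ) / μ (closedBall (y δ) δ))
      (𝓝[>] 0) (𝓝 0) := by
    refine tendsto_const_nhds.congr' (eventually_mem_nhdsWithin.mono fun δ hδ => ?_)
    simp [(hdisj δ hδ).inter_eq]
  exact zero_ne_one (tendsto_nhds_unique hzero hone)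

theorem continuousAt_measure_ball [ProperSpace X] [OpensMeasurableSpace X]
    [IsFiniteMeasureOnCompacts μ] {T : Type*} [TopologicalSpace T] [FirstCountableTopology T]
    {c : T → X} {r : T → ℝ} {t : T} (hc : ContinuousAt c t) (hr : ContinuousAt r t)
    (hsphere : μ (sphere (c t) (r t)) = 0) :
    ContinuousAt (fun s => μ (ball (c s) (r s))) t := by
  refine tendsto_measure_of_ae_tendsto_indicator (𝓝 t) measurableSet_ball
    (fun _ => measurableSet_ball) (B := ball (c t) (r t + 1)) measurableSet_ball
    measure_ball_lt_top.ne ?_ ?_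
  · have hlim : Tendsto (fun s => r s + dist (c s) (c t)) (𝓝 t) (𝓝 (r t + dist (c t) (c t))) :=
      hr.tendsto.add (hc.tendsto.dist tendsto_const_nhds)
    filter_upwards [hlim.eventually_lt_const (u := r t + 1) (by simp)] with s hs
    exact ball_subset_ball' hs.le
  · filter_upwards [measure_eq_zero_iff_ae_notMem.1 hsphere] with x hx
    have hdist : Tendsto (fun s => dist x (c s)) (𝓝 t) (𝓝 (dist x (c t))) :=
      tendsto_const_nhds.dist hc
    rcases lt_or_gt_of_ne (show dist x (c t) ≠ r t from hx) with hlt | hgt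
    · filter_upwards [hdist.eventually_lt hr hlt] with s hs
      simp only [mem_ball, hs, hlt]
    · filter_upwards [hr.tendsto.eventually_lt hdist hgt] with s hs
      simp only [mem_ball, hs.not_gt, hgt.not_gt]

end PseudoMetricSpace

section NormedSpace

variable {V : Type*} [NormedAddCommGroup V] [NormedSpace ℝ V] [SecondCountableTopology V]
  [MeasurableSpace V] [BorelSpace V] (μ : Measure V) [IsLocallyFiniteMeasure μ]
  [IsUnifLocDoublingMeasure μ]

theorem measure_sphere_eq_zero (c : V) {r : ℝ} (hr : 0 < r) : μ (sphere c r) = 0 := by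
  refine measure_eq_zero_of_porous (K := 2) isClosed_sphere.measurableSet fun x hx δ hδ => ?_
  have hxc : ‖x - c‖ = r := by rw [← dist_eq_norm, hx]
  refine ⟨x + (2 * δ / r) • (x - c), ?_, ?_⟩
  · rw [dist_self_add_right, norm_smul, hxc, Real.norm_of_nonneg (by positivity)]
    field_simp
    rfl
  · have hdist : dist (x + (2 * δ / r) • (x - c)) c = r + 2 * δ := by
      rw [dist_eq_norm, show x + (2 * δ / r) • (x - c) - c = (1 + 2 * δ / r) • (x - c) by module,
        norm_smul, hxc, Real.norm_of_nonneg (by positivity)]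
      field_simp
    refine Set.disjoint_left.2 fun z (hz : dist z c = r) hzy => ?_
    have := dist_triangle_left (x + (2 * δ / r) • (x - c)) c z
    linarith [mem_closedBall.1 hzy]

theorem ball_ae_eq_closedBall (c : V) {r : ℝ} (hr : 0 < r) : ball c r =ᵐ[μ] closedBall c r := by
  rw [← ball_union_sphere]
  exact (union_ae_eq_left_of_ae_eq_empty (ae_eq_empty.2 (measure_sphere_eq_zero μ c hr))).symm

end NormedSpace

end DoublingMeasure

section HaloSequence

/-- An abstraction of the iterated halos `H_b^k(E)`: a sequence of sets in which `H (k + 1)`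
contains every member of `𝔅` that `H k` fills up to a proportion at least `b`. -/
def IsHaloSequence {X : Type*} [MeasurableSpace X] (μ : Measure X) (𝔅 : Set (Set X)) (b : ℝ≥0∞)
    (H : ℕ → Set X) : Prop :=
  ∀ k, ∀ B ∈ 𝔅, b * μ B ≤ μ (H k ∩ B) → B ⊆ H (k + 1)

/-- The open balls of positive radius, the basis to which `IsHaloSequence` is applied in a
metric space. -/
def openBalls (X : Type*) [PseudoMetricSpace X] : Set (Set X) :=
  {B | ∃ c r, 0 < r ∧ B = ball c r}

theorem ball_mem_openBalls {X : Type*} [PseudoMetricSpace X] (c : X) {r : ℝ} (hr : 0 < r) :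
    ball c r ∈ openBalls X :=
  ⟨c, r, hr, rfl⟩

theorem monotone_ball_lineMap {V : Type*} [SeminormedAddCommGroup V] [NormedSpace ℝ V]
    {c c' : V} {r : ℝ} (h : dist c' c ≤ r) :
    Monotone fun t : ℝ => ball (AffineMap.lineMap c' c t) ((1 + t) * r) := by
  intro s t hst
  refine ball_subset_ball' ?_
  rw [dist_lineMap_lineMap, Real.dist_eq, abs_sub_comm, abs_of_nonneg (sub_nonneg.2 hst)]
  nlinarith

namespace IsHaloSequence

section MeasurableSpace

variable {X : Type*} [MeasurableSpace X] {μ : Measure X} {𝔅 : Set (Set X)} {b : ℝ≥0∞}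
  {H : ℕ → Set X}

theorem subset_of_le (hH : IsHaloSequence μ 𝔅 b H) (hb : b ≤ 1) {B : Set X} (hB : B ∈ 𝔅)
    {k l : ℕ} (hkl : k ≤ l) (hk : B ⊆ H k) : B ⊆ H l := by
  induction l, hkl using Nat.le_induction with
  | base => exact hk
  | succ l _ ih =>
    refine hH l B hB ?_
    rw [inter_eq_self_of_subset_right ih]
    exact mul_le_of_le_one_left' hb

theorem subset_of_measure_mul_pow_le (hH : IsHaloSequence μ 𝔅 b H) (hb₀ : b ≠ 0) (hb₁ : b ≤ 1)
    {Q : ℝ → Set X} {u v : ℝ} (huv : u ≤ v) (hQ : ∀ t ∈ Icc u v, Q t ∈ 𝔅)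
    (hmono : MonotoneOn Q (Icc u v)) (hcont : ContinuousOn (fun t => μ (Q t)) (Icc u v))
    {k i : ℕ} (hk : b * μ (Q u) ≤ μ (H k ∩ Q u)) (hi : μ (Q v) * b ^ i ≤ μ (Q u)) :
    Q v ⊆ H (k + i + 1) := by
  induction i generalizing v with
  | zero =>
    refine hH _ _ (hQ v (right_mem_Icc.2 huv)) ?_
    calc b * μ (Q v) ≤ b * μ (Q u) := by gcongr b * ?_; simpa using hi
      _ ≤ μ (H k ∩ Q u) := hk
      _ ≤ μ (H k ∩ Q v) := by
        gcongr
        exact hmono (left_mem_Icc.2 huv) (right_mem_Icc.2 huv) huv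
  | succ i ih =>
    have hle_div {x : ℝ≥0∞} : x ≤ μ (Q u) / b ^ i ↔ x * b ^ i ≤ μ (Q u) :=
      ENNReal.le_div_iff_mul_le (.inl (pow_ne_zero i hb₀))
        (.inl (ENNReal.pow_ne_top (ne_top_of_le_ne_top ENNReal.one_ne_top hb₁)))
    have hmem : min (μ (Q v)) (μ (Q u) / b ^ i) ∈ Icc (μ (Q u)) (μ (Q v)) := by
      refine ⟨le_min (measure_mono ?_) ?_, min_le_left _ _⟩
      · exact hmono (left_mem_Icc.2 huv) (right_mem_Icc.2 huv) huv
      · exact hle_div.2 (mul_le_of_le_one_right' (pow_le_one' hb₁ i))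
    obtain ⟨s, hs, hμs⟩ := intermediate_value_Icc huv hcont hmem
    have hsv : Icc u s ⊆ Icc u v := Icc_subset_Icc_right hs.2
    have hQs : Q s ⊆ H (k + i + 1) := by
      refine ih hs.1 (fun t ht => hQ t (hsv ht)) (hmono.mono hsv) (hcont.mono hsv) ?_
      exact hle_div.1 (hμs.trans_le (min_le_right _ _))
    refine hH _ _ (hQ v (right_mem_Icc.2 huv)) ?_
    calc b * μ (Q v) ≤ min (μ (Q v)) (μ (Q u) / b ^ i) := by
          refine le_min (mul_le_of_le_one_left' hb₁) (hle_div.2 ?_)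
          rwa [mul_right_comm, ← pow_succ', mul_comm]
      _ = μ (Q s) := hμs.symm
      _ ≤ μ (H (k + i + 1) ∩ Q v) :=
        measure_mono (subset_inter hQs (hmono hs (right_mem_Icc.2 huv) hs.2))

theorem subset_of_measure_inter_le_mul (hH : IsHaloSequence μ 𝔅 b H) (hb₀ : b ≠ 0) (hb₁ : b ≤ 1)
    {B : Set X} (hB : B ∈ 𝔅) {m : ℕ}
    (hgain : ∀ k, μ (H k ∩ B) ≤ b * μ B → μ (H k ∩ B) ≤ b * μ (H (k + m) ∩ B))
    {a : ℝ≥0∞} (ha : a * μ B ≤ μ (H 0 ∩ B)) {N : ℕ} (hN : b ^ N * b ≤ a) :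
    B ⊆ H (N * m + 1) := by
  by_cases hdense : ∃ j ≤ N, b * μ B ≤ μ (H (j * m) ∩ B)
  · obtain ⟨j, hjN, hj⟩ := hdense
    exact hH.subset_of_le hb₁ hB (by gcongr) (hH _ B hB hj)
  push Not at hdense
  have hgrowth : ∀ j ≤ N, a * μ B ≤ b ^ j * μ (H (j * m) ∩ B) := by
    intro j
    induction j with
    | zero => simpa using ha
    | succ j ih =>
      intro hj
      have hjN : j ≤ N := (Nat.le_succ j).trans hj
      calc a * μ B ≤ b ^ j * μ (H (j * m) ∩ B) := ih hjN
        _ ≤ b ^ j * (b * μ (H (j * m + m) ∩ B)) := by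
          gcongr
          exact hgain _ (hdense j hjN).le
        _ = b ^ (j + 1) * μ (H ((j + 1) * m) ∩ B) := by rw [pow_succ, mul_assoc, add_one_mul]
  refine hH _ B hB ?_
  rw [← ENNReal.mul_le_mul_iff_right (pow_ne_zero N hb₀)
    (ENNReal.pow_ne_top (ne_top_of_le_ne_top ENNReal.one_ne_top hb₁)), ← mul_assoc]
  calc b ^ N * b * μ B ≤ a * μ B := by gcongr
    _ ≤ b ^ N * μ (H (N * m) ∩ B) := hgrowth N le_rfl

end MeasurableSpace

theorem ball_two_mul_subset {V : Type*} [NormedAddCommGroup V] [NormedSpace ℝ V] [ProperSpace V]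
    [MeasurableSpace V] [BorelSpace V] {μ : Measure V} [IsLocallyFiniteMeasure μ] {b : ℝ≥0∞}
    {H : ℕ → Set V} {C : ℝ≥0} (hH : IsHaloSequence μ (openBalls V) b H)
    (hμ : IsBallDoubling μ C) (hb₀ : b ≠ 0) (hb₁ : b ≤ 1) {k i : ℕ} (hi : C * b ^ i ≤ 1)
    {c c' : V} {r : ℝ} (hr : 0 < r) (hcc' : dist c' c ≤ r)
    (hdense : b * μ (ball c' r) ≤ μ (H k ∩ ball c' r)) :
    ball c (2 * r) ⊆ H (k + i + 1) := by
  have := hμ.isUnifLocDoublingMeasure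
  have hpos : ∀ t ∈ Icc (0 : ℝ) 1, 0 < (1 + t) * r := fun t ht =>
    mul_pos (add_pos_of_pos_of_nonneg one_pos ht.1) hr
  let Q (t : ℝ) : Set V := ball (AffineMap.lineMap c' c t) ((1 + t) * r)
  have hQ₀ : Q 0 = ball c' r := by simp [Q]
  have hQ₁ : Q 1 = ball c (2 * r) := by simp [Q, one_add_one_eq_two]
  have hcont : ContinuousOn (fun t => μ (Q t)) (Icc 0 1) := by
    intro t ht
    have hcenter : Continuous fun t : ℝ => AffineMap.lineMap c' c t :=
      AffineMap.lineMap_continuous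
    have hradius : Continuous fun t : ℝ => (1 + t) * r := by fun_prop
    exact (continuousAt_measure_ball hcenter.continuousAt hradius.continuousAt
      (measure_sphere_eq_zero μ _ (hpos t ht))).continuousWithinAt
  rw [← hQ₁]
  refine hH.subset_of_measure_mul_pow_le (Q := Q) hb₀ hb₁ zero_le_one
    (fun t ht => ball_mem_openBalls _ (hpos t ht)) ((monotone_ball_lineMap hcc').monotoneOn _)
    hcont ?_ ?_
  · rwa [hQ₀]
  · rw [hQ₀, hQ₁]
    calc μ (ball c (2 * r)) * b ^ i ≤ C * μ (ball c' r) * b ^ i := by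
          gcongr
          exact hμ hr (ball_subset_ball' (by linarith))
      _ = C * b ^ i * μ (ball c' r) := by ring
      _ ≤ μ (ball c' r) := mul_le_of_le_one_left' hi

end IsHaloSequence

end HaloSequence

section DensePoints

/-- The points around which `E` occupies a proportion more than `b` of every ball of radius at
most `δ` containing the point; a quantitative form of Lebesgue density. -/
def densePoints {X : Type*} [PseudoMetricSpace X] [MeasurableSpace X] (μ : Measure X) (b : ℝ≥0∞)
    (E : Set X) (δ : ℝ) : Set X :=
  {x | ∀ c r, r ≤ δ → x ∈ ball c r → b * μ (ball c r) < μ (E ∩ ball c r)}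

theorem densePoints_antitone {X : Type*} [PseudoMetricSpace X] [MeasurableSpace X]
    (μ : Measure X) (b : ℝ≥0∞) (E : Set X) : Antitone (densePoints μ b E) :=
  fun _ _ hδ _ hx c r hr => hx c r (hr.trans hδ)

theorem ae_exists_mem_densePoints {V : Type*} [NormedAddCommGroup V] [NormedSpace ℝ V]
    [SecondCountableTopology V] [MeasurableSpace V] [BorelSpace V] (μ : Measure V)
    [IsLocallyFiniteMeasure μ] [IsUnifLocDoublingMeasure μ] {b : ℝ≥0∞} (hb : b < 1) {E : Set V}
    (hE : MeasurableSet E) : ∀ᵐ x ∂μ, x ∈ E → ∃ δ > 0, x ∈ densePoints μ b E δ := by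
  have hdensity := IsUnifLocDoublingMeasure.ae_tendsto_measure_inter_div μ E 1
  rw [ae_restrict_iff' hE] at hdensity
  filter_upwards [hdensity] with x hx hxE
  by_contra! hsparse
  simp only [densePoints, Set.mem_ofPred_eq] at hsparse
  push Not at hsparse
  choose! c r hrδ hxc hle using hsparse
  have hr : ∀ δ > 0, 0 < r δ := fun δ hδ => pos_of_mem_ball (hxc δ hδ)
  have hr_lim : Tendsto r (𝓝[>] 0) (𝓝[>] 0) :=
    tendsto_nhdsWithin_iff.2
      ⟨tendsto_of_tendsto_of_tendsto_of_le_of_le' tendsto_const_nhds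
        (tendsto_id.mono_left nhdsWithin_le_nhds)
        (eventually_mem_nhdsWithin.mono fun δ hδ => (hr δ hδ).le)
        (eventually_mem_nhdsWithin.mono hrδ), eventually_mem_nhdsWithin.mono hr⟩
  have hone := hx hxE c r hr_lim <| eventually_mem_nhdsWithin.mono fun δ hδ => by
    rw [one_mul]
    exact ball_subset_closedBall (hxc δ hδ)
  refine hb.not_ge (le_of_tendsto hone (eventually_mem_nhdsWithin.mono fun δ hδ => ?_))
  have hball := ball_ae_eq_closedBall μ (c δ) (hr δ hδ)
  rw [← measure_congr hball, ← measure_congr (ae_eq_rfl.inter hball)]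
  exact ENNReal.div_le_of_le_mul (hle δ hδ)

end DensePoints

section BinarySubdivision

variable {ι : Type*} [Fintype ι]

/-- The centres of the `2 ^ |ι|` subcubes of radius `r` into which the coordinate hyperplanes
through `c` divide the cube `ball c (2 * r)` of `ι → ℝ` (balls of the sup norm are cubes). -/
def subcubeCenter (c : ι → ℝ) (r : ℝ) (s : ι → Bool) : ι → ℝ :=
  fun i => c i + if s i then r else -r

theorem dist_subcubeCenter_le (c : ι → ℝ) {r : ℝ} (hr : 0 ≤ r) (s : ι → Bool) :
    dist (subcubeCenter c r s) c ≤ r := by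
  refine (dist_pi_le_iff hr).2 fun i => ?_
  rw [subcubeCenter, Real.dist_eq]
  split_ifs <;> simp [abs_of_nonneg hr]

theorem ball_subcubeCenter_subset (c : ι → ℝ) {r : ℝ} (hr : 0 ≤ r) (s : ι → Bool) :
    ball (subcubeCenter c r s) r ⊆ ball c (2 * r) :=
  ball_subset_ball' (by linarith [dist_subcubeCenter_le c hr s])

theorem ball_two_mul_subset_iUnion_closedBall (c : ι → ℝ) {r : ℝ} (hr : 0 ≤ r) :
    ball c (2 * r) ⊆ ⋃ s, closedBall (subcubeCenter c r s) r := by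
  intro x hx
  refine mem_iUnion.2 ⟨fun i => decide (c i ≤ x i), (dist_pi_le_iff hr).2 fun i => ?_⟩
  have hi := (dist_le_pi_dist x c i).trans_lt hx
  simp only [subcubeCenter, Real.dist_eq, abs_lt, abs_le, decide_eq_true_eq] at hi ⊢
  split_ifs <;> constructor <;> linarith

theorem pairwise_disjoint_ball_subcubeCenter (c : ι → ℝ) (r : ℝ) :
    Pairwise (Function.onFun Disjoint fun s => ball (subcubeCenter c r s) r) := by
  intro s s' hss'
  obtain ⟨i, hi⟩ := Function.ne_iff.1 hss'
  refine Set.disjoint_left.2 fun x hx hx' => ?_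
  have h := (dist_le_pi_dist _ _ i).trans_lt hx
  have h' := (dist_le_pi_dist _ _ i).trans_lt hx'
  simp only [subcubeCenter, Real.dist_eq, abs_lt] at h h'
  cases hs : s i <;> cases hs' : s' i <;> simp [hs, hs'] at h h' hi <;> linarith

variable {μ : Measure (ι → ℝ)} [IsLocallyFiniteMeasure μ]

theorem measure_inter_ball_two_mul_eq_tsum [IsUnifLocDoublingMeasure μ] (A : Set (ι → ℝ))
    (c : ι → ℝ) {r : ℝ} (hr : 0 < r) :
    μ (A ∩ ball c (2 * r)) = ∑' s, μ (A ∩ ball (subcubeCenter c r s) r) := by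
  have hunion : ball c (2 * r) =ᵐ[μ] ⋃ s, ball (subcubeCenter c r s) r :=
    Filter.EventuallyLE.antisymm
      ((ball_two_mul_subset_iUnion_closedBall c hr.le).eventuallyLE.trans
        (Filter.EventuallyEq.countable_iUnion fun s => (ball_ae_eq_closedBall μ _ hr)).symm.le)
      (iUnion_subset fun s => ball_subcubeCenter_subset c hr.le s).eventuallyLE
  calc μ (A ∩ ball c (2 * r)) = μ (A ∩ ⋃ s, ball (subcubeCenter c r s) r) :=
        measure_congr (ae_eq_rfl.inter hunion)
    _ = μ.restrict A (⋃ s, ball (subcubeCenter c r s) r) := by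
        rw [Measure.restrict_apply (.iUnion fun _ => measurableSet_ball), inter_comm]
    _ = ∑' s, μ.restrict A (ball (subcubeCenter c r s) r) :=
        measure_iUnion (pairwise_disjoint_ball_subcubeCenter c r) fun _ => measurableSet_ball
    _ = ∑' s, μ (A ∩ ball (subcubeCenter c r s) r) := by
        simp only [Measure.restrict_apply measurableSet_ball, inter_comm]

variable {b : ℝ≥0∞} {E E' : Set (ι → ℝ)}

-- Stopping-time argument: subdivide until a subcube is filled by `E` up to the proportion `b`, at
-- which moment `E'` swallows its parent, where `E` still has proportion at most `b`. A cube of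
-- radius `δ` that is never selected contains no point of `densePoints μ b E δ`.
theorem measure_inter_densePoints_inter_ball_le [IsUnifLocDoublingMeasure μ]
    (hparent : ∀ ⦃c c' : ι → ℝ⦄ ⦃r : ℝ⦄, 0 < r → dist c' c ≤ r →
      b * μ (ball c' r) ≤ μ (E ∩ ball c' r) → ball c (2 * r) ⊆ E')
    {δ : ℝ} (hδ : 0 < δ) (j : ℕ) (c : ι → ℝ)
    (hc : μ (E ∩ ball c (2 ^ j * δ)) ≤ b * μ (ball c (2 ^ j * δ))) :
    μ (E ∩ densePoints μ b E δ ∩ ball c (2 ^ j * δ)) ≤ b * μ (E' ∩ ball c (2 ^ j * δ)) := by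
  induction j generalizing c with
  | zero =>
    have hempty : E ∩ densePoints μ b E δ ∩ ball c (2 ^ 0 * δ) = ∅ :=
      eq_empty_of_forall_notMem fun x ⟨⟨_, hxdense⟩, hxc⟩ =>
        (hxdense c (2 ^ 0 * δ) (by simp) hxc).not_ge hc
    rw [hempty, measure_empty]
    exact zero_le
  | succ j ih =>
    set r : ℝ := 2 ^ j * δ with hr_def
    have hr : 0 < r := by positivity
    rw [pow_succ', mul_assoc, ← hr_def] at hc ⊢
    by_cases hselected : ∃ s, b * μ (ball (subcubeCenter c r s) r) ≤
        μ (E ∩ ball (subcubeCenter c r s) r)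
    · obtain ⟨s, hs⟩ := hselected
      rw [inter_eq_self_of_subset_right (hparent hr (dist_subcubeCenter_le c hr.le s) hs)]
      exact (measure_mono (inter_subset_inter_left _ inter_subset_left)).trans hc
    · push Not at hselected
      rw [measure_inter_ball_two_mul_eq_tsum _ _ hr, measure_inter_ball_two_mul_eq_tsum _ _ hr,
        ← ENNReal.tsum_mul_left]
      exact ENNReal.tsum_le_tsum fun s => ih _ (hselected s).le

theorem measure_inter_ball_le_mul [IsUnifLocDoublingMeasure μ] (hb : b < 1)
    (hE : MeasurableSet E)
    (hparent : ∀ ⦃c c' : ι → ℝ⦄ ⦃r : ℝ⦄, 0 < r → dist c' c ≤ r →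
      b * μ (ball c' r) ≤ μ (E ∩ ball c' r) → ball c (2 * r) ⊆ E')
    {c : ι → ℝ} {r : ℝ} (hr : 0 < r) (hc : μ (E ∩ ball c r) ≤ b * μ (ball c r)) :
    μ (E ∩ ball c r) ≤ b * μ (E' ∩ ball c r) := by
  let D (j : ℕ) : Set (ι → ℝ) := E ∩ densePoints μ b E (r / 2 ^ j) ∩ ball c r
  have hD_mono : Monotone D := fun j j' hjj' => by
    refine inter_subset_inter_left _ (inter_subset_inter_right _ (densePoints_antitone μ b E ?_))
    gcongr
    exact one_le_two
  have hcover : ∀ᵐ x ∂μ, x ∈ E ∩ ball c r → x ∈ ⋃ j, D j := by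
    filter_upwards [ae_exists_mem_densePoints μ hb hE] with x hx hxc
    obtain ⟨δ, hδ, hxδ⟩ := hx hxc.1
    obtain ⟨j, hj⟩ := pow_unbounded_of_one_lt (r / δ) one_lt_two
    have hjδ : r / 2 ^ j ≤ δ := (div_le_comm₀ (by positivity) hδ).2 hj.le
    exact mem_iUnion.2 ⟨j, ⟨hxc.1, densePoints_antitone μ b E hjδ hxδ⟩, hxc.2⟩
  calc μ (E ∩ ball c r) ≤ μ (⋃ j, D j) := measure_mono_ae hcover
    _ = ⨆ j, μ (D j) := hD_mono.measure_iUnion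
    _ ≤ b * μ (E' ∩ ball c r) := iSup_le fun j => by
      have hrj : 2 ^ j * (r / 2 ^ j) = r := mul_div_cancel₀ r (by positivity)
      have h := measure_inter_densePoints_inter_ball_le hparent (δ := r / 2 ^ j) (by positivity)
        j c
      rw [hrj] at h
      exact h hc

theorem IsHaloSequence.ball_subset_of_le_measure_inter {H : ℕ → Set (ι → ℝ)} {C : ℝ≥0}
    (hH : IsHaloSequence μ (openBalls (ι → ℝ)) b H) (hmeas : ∀ k, MeasurableSet (H k))
    (hμ : IsBallDoubling μ C) (hb₀ : b ≠ 0) (hb₁ : b < 1) {i : ℕ} (hi : C * b ^ i ≤ 1)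
    {c : ι → ℝ} {r : ℝ} (hr : 0 < r) {a : ℝ≥0∞} (ha : a * μ (ball c r) ≤ μ (H 0 ∩ ball c r))
    {N : ℕ} (hN : b ^ N * b ≤ a) : ball c r ⊆ H (N * (i + 1) + 1) := by
  have := hμ.isUnifLocDoublingMeasure
  refine hH.subset_of_measure_inter_le_mul hb₀ hb₁.le (ball_mem_openBalls c hr) ?_ ha hN
  exact fun k => measure_inter_ball_le_mul hb₁ (hmeas k)
    (fun _ _ _ hr hcc' hdense => hH.ball_two_mul_subset hμ hb₀ hb₁.le hi hr hcc' hdense) hr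

end BinarySubdivision

section MaximalOperator

variable {n : ℕ} (μ : Measure (EuclideanSpace ℝ (Fin n)))
  {𝔅 : Set (Set (EuclideanSpace ℝ (Fin n)))}

theorem measurable_maxOp (h𝔅 : ∀ B ∈ 𝔅, IsOpen B) (f : EuclideanSpace ℝ (Fin n) → ℝ) :
    Measurable (maxOp μ 𝔅 f) := by
  refine LowerSemicontinuous.measurable (lowerSemicontinuous_biSup fun B hB => ?_)
  convert (h𝔅 B hB).lowerSemicontinuous_indicator (bot_le (a :=
    ⨆ _ : 0 < μ B, (∫⁻ y in B, ENNReal.ofReal |f y| ∂μ) / μ B)) using 2 with x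
  by_cases hx : x ∈ B <;> simp [hx]

theorem measurableSet_Hiter (h𝔅 : ∀ B ∈ 𝔅, IsOpen B) (β : ℝ)
    {E : Set (EuclideanSpace ℝ (Fin n))} (hE : MeasurableSet E) :
    ∀ k, MeasurableSet (Hiter μ 𝔅 β E k)
  | 0 => hE
  | _ + 1 => measurableSet_le measurable_const (measurable_maxOp μ h𝔅 _)

theorem div_le_maxOp_indicator {S B : Set (EuclideanSpace ℝ (Fin n))} (hS : MeasurableSet S)
    (hB : B ∈ 𝔅) (hμB : 0 < μ B) {x : EuclideanSpace ℝ (Fin n)} (hx : x ∈ B) :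
    μ (S ∩ B) / μ B ≤ maxOp μ 𝔅 (S.indicator 1) x := by
  have habs : (fun y => ENNReal.ofReal |(S.indicator 1 : EuclideanSpace ℝ (Fin n) → ℝ) y|) =
      S.indicator 1 := by
    ext y
    by_cases hy : y ∈ S <;> simp [hy]
  refine le_iSup₂_of_le B hB (le_iSup₂_of_le hx hμB ?_)
  rw [habs, lintegral_indicator_one hS, Measure.restrict_apply hS]

theorem isHaloSequence_Hiter (h𝔅 : ∀ B ∈ 𝔅, IsOpen B) (β : ℝ)
    {E : Set (EuclideanSpace ℝ (Fin n))} (hE : MeasurableSet E) :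
    IsHaloSequence μ {B ∈ 𝔅 | 0 < μ B ∧ μ B < ∞} (ENNReal.ofReal β) (Hiter μ 𝔅 β E) := by
  rintro k B ⟨hB, hpos, hfin⟩ hdense x hx
  exact ((ENNReal.le_div_iff_mul_le (.inl hpos.ne') (.inl hfin.ne)).2 hdense).trans
    (div_le_maxOp_indicator μ (measurableSet_Hiter μ h𝔅 β hE k) hB hpos hx)

end MaximalOperator

section Parallelepiped

variable {n : ℕ}

/-- An open parallelepiped in `ℝⁿ`, encoded as the image of the open unit ball of the sup norm
under an affine isomorphism. -/
def IsOpenParallelepiped (R : Set (EuclideanSpace ℝ (Fin n))) : Prop :=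
  ∃ T : (Fin n → ℝ) ≃ᴬ[ℝ] EuclideanSpace ℝ (Fin n), R = T '' ball 0 1

theorem IsAxisRect.isOpenParallelepiped {R : Set (EuclideanSpace ℝ (Fin n))}
    (hR : IsAxisRect R) : IsOpenParallelepiped R := by
  obtain ⟨a, b, hab, rfl⟩ := hR
  have hpos : ∀ i, 0 < (b i - a i) / 2 := fun i => half_pos (sub_pos.2 (hab i))
  let scale : (Fin n → ℝ) ≃L[ℝ] (Fin n → ℝ) := ContinuousLinearEquiv.piCongrRight fun i =>
    ContinuousLinearEquiv.unitsEquivAut ℝ (Units.mk0 ((b i - a i) / 2) (hpos i).ne')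
  let T : (Fin n → ℝ) ≃ᴬ[ℝ] EuclideanSpace ℝ (Fin n) :=
    (scale.toContinuousAffineEquiv.trans
      (ContinuousAffineEquiv.constVAdd ℝ _ fun i => (a i + b i) / 2)).trans
      (EuclideanSpace.equiv (Fin n) ℝ).symm.toContinuousAffineEquiv
  have hT : ∀ y i, T y i = (a i + b i) / 2 + y i * ((b i - a i) / 2) := fun y i => rfl
  refine ⟨T, ?_⟩
  ext x
  obtain ⟨y, rfl⟩ := T.surjective x
  rw [T.injective.mem_set_image, mem_ball_zero_iff, pi_norm_lt_iff one_pos]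
  refine forall_congr' fun i => ?_
  rw [hT, Real.norm_eq_abs, abs_lt, mem_Ioo]
  constructor <;> rintro ⟨h₁, h₂⟩ <;> constructor <;> nlinarith [hpos i]

theorem IsRect.isOpenParallelepiped {R : Set (EuclideanSpace ℝ (Fin n))} (hR : IsRect R) :
    IsOpenParallelepiped R := by
  obtain ⟨f, S, hS, rfl⟩ := hR
  obtain ⟨T, rfl⟩ := hS.isOpenParallelepiped
  exact ⟨T.trans f.toRealAffineIsometryEquiv.toContinuousAffineEquiv, (image_comp _ _ _).symm⟩

theorem IsOpenParallelepiped.isOpen {R : Set (EuclideanSpace ℝ (Fin n))}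
    (hR : IsOpenParallelepiped R) : IsOpen R := by
  obtain ⟨T, rfl⟩ := hR
  exact T.toHomeomorph.isOpenMap _ isOpen_ball

end Parallelepiped

section Homothety

theorem affineMap_image_vadd_smul {V W : Type*} [AddCommGroup V] [Module ℝ V] [AddCommGroup W]
    [Module ℝ W] (T : V →ᵃ[ℝ] W) (v : V) (s : ℝ) (A : Set V) :
    T '' (v +ᵥ s • A) = (T v - s • T 0) +ᵥ s • T '' A := by
  have hT : ∀ x, T x = T.linear x + T 0 := fun x => congrFun T.decomp x
  simp only [← image_vadd, ← image_smul, image_image]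
  refine image_congr fun x _ => ?_
  rw [vadd_eq_add, vadd_eq_add, hT (v + s • x), hT v, hT x, map_add, map_smul]
  module

theorem ball_mul_eq_vadd_smul {V : Type*} [SeminormedAddCommGroup V] [NormedSpace ℝ V]
    (c c' : V) {s : ℝ} (hs : 0 < s) (r : ℝ) :
    ball c (s * r) = (c - s • c') +ᵥ s • ball c' r := by
  rw [_root_.smul_ball hs.ne', Real.norm_of_nonneg hs.le, Metric.vadd_ball, vadd_eq_add,
    sub_add_cancel]

end Homothety

section Pullback

section ContinuousAffineEquiv

variable {V W : Type*} [NormedAddCommGroup V] [NormedSpace ℝ V] [NormedAddCommGroup W]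
  [NormedSpace ℝ W]

theorem image_ball_mul_eq_vadd_smul_s7 (T : V ≃ᴬ[ℝ] W) (c c' : V) {s : ℝ} (hs : 0 < s) (r : ℝ) :
    ∃ σ : W, T '' ball c (s * r) = σ +ᵥ s • T '' ball c' r := by
  rw [ball_mul_eq_vadd_smul c c' hs]
  exact ⟨_, affineMap_image_vadd_smul T.toAffineMap _ s _⟩

variable [MeasurableSpace V] [BorelSpace V] [MeasurableSpace W] [BorelSpace W]

theorem comap_continuousAffineEquiv_apply (μ : Measure W) (T : V ≃ᴬ[ℝ] W) (A : Set V) :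
    μ.comap T A = μ (T '' A) :=
  T.toHomeomorph.measurableEmbedding.comap_apply μ A

theorem isLocallyFiniteMeasure_comap_continuousAffineEquiv [LocallyCompactSpace V]
    (μ : Measure W) [IsLocallyFiniteMeasure μ] (T : V ≃ᴬ[ℝ] W) :
    IsLocallyFiniteMeasure (μ.comap T) :=
  have : IsFiniteMeasureOnCompacts (μ.comap T) :=
    IsFiniteMeasureOnCompacts.comap' μ T.continuous T.toHomeomorph.measurableEmbedding
  isLocallyFiniteMeasure_of_isFiniteMeasureOnCompacts

end ContinuousAffineEquiv

variable {n : ℕ} {𝔊 : Set (Set (EuclideanSpace ℝ (Fin n)))}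
  {μ : Measure (EuclideanSpace ℝ (Fin n))}
  {T : (Fin n → ℝ) ≃ᴬ[ℝ] EuclideanSpace ℝ (Fin n)}

theorem HomothecyInvariant.image_ball_mem_s7 (h𝔊 : HomothecyInvariant 𝔊)
    (hT : T '' ball 0 1 ∈ 𝔊) (c : Fin n → ℝ) {r : ℝ} (hr : 0 < r) : T '' ball c r ∈ 𝔊 := by
  obtain ⟨σ, hσ⟩ := image_ball_mul_eq_vadd_smul_s7 T c 0 hr 1
  rw [mul_one] at hσ
  rw [hσ]
  exact (h𝔊 _ ((h𝔊 _ hT).2 r hr)).1 σ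

theorem DoublingWrt.isBallDoubling_comap {Δ : ℝ} (hμ : DoublingWrt μ 𝔊 Δ)
    (h𝔊 : HomothecyInvariant 𝔊) (hT : T '' ball 0 1 ∈ 𝔊) :
    IsBallDoubling (μ.comap T) Δ.toNNReal := by
  intro c c' r hr hsub
  obtain ⟨σ, hσ⟩ := image_ball_mul_eq_vadd_smul_s7 T c c' two_pos r
  rw [comap_continuousAffineEquiv_apply, comap_continuousAffineEquiv_apply, hσ]
  exact hμ _ (h𝔊.image_ball_mem_s7 hT c' hr) σ (hσ ▸ image_mono hsub)

theorem isHaloSequence_preimage_Hiter [IsLocallyFiniteMeasure μ] (hopen : ∀ B ∈ 𝔊, IsOpen B)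
    (h𝔊 : HomothecyInvariant 𝔊) {Δ : ℝ} (hμ : DoublingWrt μ 𝔊 Δ) (hT : T '' ball 0 1 ∈ 𝔊)
    (hpos : 0 < μ (T '' ball 0 1)) (β : ℝ) {E : Set (EuclideanSpace ℝ (Fin n))}
    (hE : MeasurableSet E) :
    IsHaloSequence (μ.comap T) (openBalls (Fin n → ℝ)) (ENNReal.ofReal β)
      (fun k => T ⁻¹' Hiter μ 𝔊 β E k) := by
  have := isLocallyFiniteMeasure_comap_continuousAffineEquiv μ T
  rintro k _ ⟨c, r, hr, rfl⟩ hdense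
  have hball_pos : 0 < μ.comap T (ball c r) :=
    (hμ.isBallDoubling_comap h𝔊 hT).measure_ball_pos
      (hpos.trans_eq (comap_continuousAffineEquiv_apply μ T _).symm) c hr
  have hball_fin : μ.comap T (ball c r) < ∞ := measure_ball_lt_top
  simp only [comap_continuousAffineEquiv_apply, image_preimage_inter] at hdense hball_pos hball_fin
  exact image_subset_iff.1 (isHaloSequence_Hiter μ hopen β hE k _
    ⟨h𝔊.image_ball_mem_s7 hT c hr, hball_pos, hball_fin⟩ hdense)

end Pullback

section Numerics

theorem pow_mul_le_one_of_logb_div_logb_le {b β t : ℝ} (hb : 1 < b) (hβ₀ : 0 < β) (hβ₁ : β < 1)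
    (ht : 0 < t) {N : ℕ} (h : Real.logb b t / Real.logb b (1 / β) ≤ N) : β ^ N * t ≤ 1 := by
  have hlog : 0 < Real.logb b (1 / β) := Real.logb_pos hb (one_lt_one_div hβ₀ hβ₁)
  rw [div_le_iff₀ hlog, ← Real.logb_pow, Real.logb_le_logb hb ht (by positivity), one_div,
    inv_pow, ← one_div, le_div_iff₀ (by positivity)] at h
  linarith

theorem exists_ceil_eq_succ_and_mul_pow_le_one {β Δ : ℝ} (hβ₀ : 0 < β) (hβ₁ : β < 1) (hΔ : 0 < Δ) :
    ∃ i : ℕ, ⌈2 + max (Real.logb 2 (β * Δ)) 0 / Real.logb 2 (1 / β)⌉₊ = i + 1 ∧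
      Δ * β ^ i ≤ 1 := by
  set x := max (Real.logb 2 (β * Δ)) 0 / Real.logb 2 (1 / β)
  have hlog : 0 < Real.logb 2 (1 / β) := Real.logb_pos one_lt_two (one_lt_one_div hβ₀ hβ₁)
  have hx₀ : 0 ≤ x := div_nonneg (le_max_right _ _) hlog.le
  refine ⟨⌈x⌉₊ + 1, ?_, ?_⟩
  · rw [add_comm, ← Nat.cast_two, Nat.ceil_add_natCast hx₀]
  · have hceil : Real.logb 2 (β * Δ) / Real.logb 2 (1 / β) ≤ ⌈x⌉₊ :=
      (div_le_div_of_nonneg_right (le_max_left _ _) hlog.le).trans (Nat.le_ceil x)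
    calc Δ * β ^ (⌈x⌉₊ + 1) = β ^ ⌈x⌉₊ * (β * Δ) := by ring
      _ ≤ 1 := pow_mul_le_one_of_logb_div_logb_le one_lt_two hβ₀ hβ₁ (mul_pos hβ₀ hΔ) hceil

end Numerics

theorem statement7_general {n : ℕ} {𝔊 : Set (Set (EuclideanSpace ℝ (Fin n)))}
    (hopen : ∀ B ∈ 𝔊, IsOpen B) (h𝔊 : HomothecyInvariant 𝔊)
    {μ : Measure (EuclideanSpace ℝ (Fin n))} [IsLocallyFiniteMeasure μ]
    {Δ : ℝ} (hΔ : 0 < Δ) (hμ : DoublingWrt μ 𝔊 Δ) {β : ℝ} (hβ₀ : 0 < β) (hβ₁ : β < 1)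
    {E : Set (EuclideanSpace ℝ (Fin n))} (hE : MeasurableSet E)
    {R : Set (EuclideanSpace ℝ (Fin n))} (hR : R ∈ 𝔊) (hRpar : IsOpenParallelepiped R)
    (hRpos : 0 < μ R) {α : ℝ} (hα : 0 < α) (hER : ENNReal.ofReal α * μ R ≤ μ (E ∩ R)) :
    R ⊆ Hiter μ 𝔊 β E
      (⌈Real.logb 2 (β / α) / Real.logb 2 (1 / β)⌉₊ *
        ⌈2 + max (Real.logb 2 (β * Δ)) 0 / Real.logb 2 (1 / β)⌉₊ + 1) := by
  obtain ⟨T, rfl⟩ := hRpar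
  obtain ⟨i, hi, hΔi⟩ := exists_ceil_eq_succ_and_mul_pow_le_one hβ₀ hβ₁ hΔ
  have hαN := pow_mul_le_one_of_logb_div_logb_le one_lt_two hβ₀ hβ₁ (div_pos hβ₀ hα)
    (Nat.le_ceil _)
  rw [← mul_div_assoc, div_le_one hα] at hαN
  have := isLocallyFiniteMeasure_comap_continuousAffineEquiv μ T
  rw [hi, image_subset_iff]
  refine (isHaloSequence_preimage_Hiter hopen h𝔊 hμ hR hRpos β hE).ball_subset_of_le_measure_inter
    (fun k => T.continuous.measurable (measurableSet_Hiter μ hopen β hE k))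
    (hμ.isBallDoubling_comap h𝔊 hR) (by simpa using hβ₀) (by simpa using hβ₁) (i := i) ?_ one_pos
    (a := ENNReal.ofReal α) ?_ ?_
  · change ENNReal.ofReal Δ * _ ≤ 1
    rw [← ENNReal.ofReal_pow hβ₀.le, ← ENNReal.ofReal_mul hΔ.le]
    exact ENNReal.ofReal_le_one.2 hΔi
  · simpa only [comap_continuousAffineEquiv_apply, image_preimage_inter, Hiter] using hER
  · rw [← ENNReal.ofReal_pow hβ₀.le, ← ENNReal.ofReal_mul (by positivity)]
    exact ENNReal.ofReal_le_ofReal hαN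


/-- Lemma `l.main` of the paper. Let `𝔊` be a homothecy invariant
collection of open rectangles, `μ` a nonzero locally finite Borel measure doubling
w.r.t. `𝔊` with constant `Δ`, and `β ∈ (0,1)`. If `E` is Borel, `R ∈ 𝔊` with
`μ(R) > 0` and `μ(E ∩ R)/μ(R) = α ∈ (0,β)`, then `R ⊆ H_β^{k_{α,β}}(E)` with
`k_{α,β} = ⌈log₂(β/α)/log₂(1/β)⌉ · ⌈2 + log₂⁺(β·Δ)/log₂(1/β)⌉ + 1`. -/
theorem statement7 (n : ℕ) (𝔊 : Set (Set (EuclideanSpace ℝ (Fin n))))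
    (hG : ∀ R ∈ 𝔊, IsRect R) (hhom : HomothecyInvariant 𝔊)
    (μ : Measure (EuclideanSpace ℝ (Fin n)))
    (hloc : IsLocallyFiniteMeasure μ) (hμ : μ ≠ 0)
    (Δ : ℝ) (hΔ : 1 < Δ) (hdbl : DoublingWrt μ 𝔊 Δ)
    (β : ℝ) (hβ : β ∈ Set.Ioo (0 : ℝ) 1)
    (E : Set (EuclideanSpace ℝ (Fin n))) (hE : MeasurableSet E)
    (R : Set (EuclideanSpace ℝ (Fin n))) (hR : R ∈ 𝔊) (hRpos : 0 < μ R)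
    (α : ℝ) (hα : α ∈ Set.Ioo (0 : ℝ) β)
    (hratio : μ (E ∩ R) = ENNReal.ofReal α * μ R) :
    R ⊆ Hiter μ 𝔊 β E
      (⌈Real.logb 2 (β / α) / Real.logb 2 (1 / β)⌉₊ *
        ⌈2 + max (Real.logb 2 (β * Δ)) 0 / Real.logb 2 (1 / β)⌉₊ + 1) :=
  statement7_general (fun B hB => (hG B hB).isOpenParallelepiped.isOpen) hhom
    (one_pos.trans hΔ) hdbl hβ.1 hβ.2 hE hR (hG R hR).isOpenParallelepiped hRpos hα.1 hratio.ge
end
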